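/- arXiv:1809.02104 — 2 statements merged into one kernel-verified Lean document; each statement's English description precedes it below -/
import Mathlib

section
/- (Existence of adversarial examples, ℓ_p case) Let ρ be a probability density on [0,1]ⁿ with support S, and let R ⊂ [0,1]ⁿ be measurable with vol[R] < 1/2. Fix p > 0 and set p* = min(p,2). If vol[S] ≥ (1/2)·exp(-π·ε²·n^{1-2/p*}), then there exists a point x with ρ(x) > 0 and a point x̂ ∈ Rᶜ with ‖x - x̂‖_p ≤ ε. -/
open Real MeasureTheory

/-- The ℓ_p distance on ℝⁿ (for p > 0). -/
noncomputable def lpDist {n : ℕ} (p : ℝ) (x y : Fin n → ℝ) : ℝ :=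
  (∑ i, |x i - y i| ^ p) ^ (1 / p)

noncomputable def gphi (x : ℝ) : ℝ := (√(2 * π))⁻¹ * Real.exp (-x ^ 2 / 2)

noncomputable def gPhi (x : ℝ) : ℝ := (ProbabilityTheory.gaussianReal 0 1).real (Set.Iic x)

noncomputable def gQ : ℝ → ℝ := Function.invFun gPhi

open Classical in
noncomputable def gI (p : ℝ) : ℝ := if p ∈ Set.Ioo (0:ℝ) 1 then gphi (gQ p) else 0

lemma gphi_pos (x : ℝ) : 0 < gphi x := by unfold gphi; positivity

lemma gphi_cont : Continuous gphi := by unfold gphi; fun_prop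

lemma gphi_neg (x : ℝ) : gphi (-x) = gphi x := by simp [gphi]

lemma gphi_le_one (x : ℝ) : gphi x ≤ 1 := by
  unfold gphi
  have h1 : (√(2 * π))⁻¹ ≤ 1 := by
    apply inv_le_one_of_one_le₀
    rw [Real.one_le_sqrt]
    linarith [Real.pi_gt_three]
  have h2 : Real.exp (-x ^ 2 / 2) ≤ 1 := by
    rw [Real.exp_le_one_iff]; nlinarith [sq_nonneg x]
  exact mul_le_one₀ h1 (Real.exp_pos _).le h2

lemma gphi_le_c (x : ℝ) : gphi x ≤ (√(2 * π))⁻¹ := by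
  unfold gphi
  have h2 : Real.exp (-x ^ 2 / 2) ≤ 1 := by
    rw [Real.exp_le_one_iff]; nlinarith [sq_nonneg x]
  exact mul_le_of_le_one_right (by positivity) h2

lemma gphi_eq : gphi = ProbabilityTheory.gaussianPDFReal 0 1 := by
  ext x; simp [gphi, ProbabilityTheory.gaussianPDFReal]

lemma gphi_int : Integrable gphi := by
  rw [gphi_eq]; exact ProbabilityTheory.integrable_gaussianPDFReal 0 1

lemma gPhi_eq (x : ℝ) : gPhi x = ∫ y in Set.Iic x, gphi y := by
  rw [gPhi, Measure.real, ProbabilityTheory.gaussianReal_apply_eq_integral 0 one_ne_zero,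
    gphi_eq, ENNReal.toReal_ofReal]
  exact integral_nonneg (fun y => ProbabilityTheory.gaussianPDFReal_nonneg 0 1 y)

lemma gPhi_deriv (x : ℝ) : HasDerivAt gPhi (gphi x) x := by
  have h : gPhi = fun x => gPhi 0 + ∫ y in (0:ℝ)..x, gphi y := by
    ext x
    rw [← intervalIntegral.integral_Iic_sub_Iic gphi_int.integrableOn gphi_int.integrableOn]
    rw [gPhi_eq, gPhi_eq]; ring
  rw [h]
  apply HasDerivAt.const_add
  exact intervalIntegral.integral_hasDerivAt_right (gphi_cont.intervalIntegrable _ _)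
    gphi_cont.aestronglyMeasurable.stronglyMeasurableAtFilter gphi_cont.continuousAt

lemma gPhi_cont : Continuous gPhi :=
  continuous_iff_continuousAt.2 fun x => (gPhi_deriv x).continuousAt

lemma gPhi_strictMono : StrictMono gPhi := by
  apply strictMono_of_deriv_pos
  intro x; rw [(gPhi_deriv x).deriv]; exact gphi_pos x

lemma gPhi_cdf : gPhi = ProbabilityTheory.cdf (ProbabilityTheory.gaussianReal 0 1) := by
  ext x; rw [ProbabilityTheory.cdf_eq_real]; rfl

lemma gPhi_bot : Filter.Tendsto gPhi Filter.atBot (nhds 0) := by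
  rw [gPhi_cdf]; exact ProbabilityTheory.tendsto_cdf_atBot _
lemma gPhi_top : Filter.Tendsto gPhi Filter.atTop (nhds 1) := by
  rw [gPhi_cdf]; exact ProbabilityTheory.tendsto_cdf_atTop _

lemma gPhi_pos (x : ℝ) : 0 < gPhi x :=
  lt_of_le_of_lt (by unfold gPhi; positivity) (gPhi_strictMono (sub_one_lt x))

lemma gPhi_lt_one (x : ℝ) : gPhi x < 1 :=
  lt_of_lt_of_le (gPhi_strictMono (lt_add_one x)) (by rw [gPhi_cdf]; exact ProbabilityTheory.cdf_le_one _ _)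

lemma gPhi_neg (x : ℝ) : gPhi (-x) = 1 - gPhi x := by
  have h : ∀ x, HasDerivAt (fun x => gPhi (-x) + gPhi x) 0 x := by
    intro x
    have := ((gPhi_deriv (-x)).comp x (hasDerivAt_neg x)).add (gPhi_deriv x)
    rw [gphi_neg] at this
    convert! this using 1; ring
  have hc : ∀ y, gPhi (-y) + gPhi y = gPhi (-x) + gPhi x := fun y =>
    is_const_of_deriv_eq_zero (fun z => (h z).differentiableAt) (fun z => (h z).deriv) y x
  have ht : Filter.Tendsto (fun y => gPhi (-y) + gPhi y) Filter.atTop (nhds (0 + 1)) :=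
    (gPhi_bot.comp Filter.tendsto_neg_atTop_atBot).add gPhi_top
  simp only [hc] at ht
  have := tendsto_nhds_unique tendsto_const_nhds ht
  linarith

lemma gPhi_zero : gPhi 0 = 1 / 2 := by
  have := gPhi_neg 0
  simp at this; linarith

lemma gQ_Phi (x : ℝ) : gQ (gPhi x) = x := Function.leftInverse_invFun gPhi_strictMono.injective x

lemma gPhi_Q {p : ℝ} (hp : p ∈ Set.Ioo (0:ℝ) 1) : gPhi (gQ p) = p := by
  apply Function.invFun_eq
  obtain ⟨a, ha⟩ := (gPhi_bot.eventually (gt_mem_nhds hp.1)).exists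
  obtain ⟨b, hb⟩ := (gPhi_top.eventually (lt_mem_nhds hp.2)).exists
  exact mem_range_of_exists_le_of_exists_ge gPhi_cont ⟨a, ha.le⟩ ⟨b, hb.le⟩

lemma gQ_strictMonoOn : StrictMonoOn gQ (Set.Ioo (0:ℝ) 1) := by
  intro a ha b hb hab
  rw [← gPhi_strictMono.lt_iff_lt, gPhi_Q ha, gPhi_Q hb]; exact hab

lemma gQ_neg {p : ℝ} (hp : p ∈ Set.Ioo (0:ℝ) 1) : gQ (1 - p) = - gQ p := by
  conv_lhs => rw [← gPhi_Q hp]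
  rw [← gPhi_neg, gQ_Phi]

lemma gQ_contAt {p : ℝ} (hp : p ∈ Set.Ioo (0:ℝ) 1) : ContinuousAt gQ p := by
  apply gQ_strictMonoOn.continuousAt_of_image_mem_nhds (Ioo_mem_nhds hp.1 hp.2)
  have : gQ '' Set.Ioo (0:ℝ) 1 = Set.univ := by
    ext x; simp only [Set.mem_image, Set.mem_univ, iff_true]
    exact ⟨gPhi x, ⟨gPhi_pos x, gPhi_lt_one x⟩, gQ_Phi x⟩
  rw [this]; exact Filter.univ_mem

lemma gI_eq {p : ℝ} (hp : p ∈ Set.Ioo (0:ℝ) 1) : gI p = gphi (gQ p) := by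
  simp only [gI, if_pos hp]

lemma gI_Phi (x : ℝ) : gI (gPhi x) = gphi x := by
  rw [gI_eq ⟨gPhi_pos x, gPhi_lt_one x⟩, gQ_Phi]

lemma gI_zero {p : ℝ} (hp : p ∉ Set.Ioo (0:ℝ) 1) : gI p = 0 := by
  simp only [gI, if_neg hp]

lemma gI_nonneg (p : ℝ) : 0 ≤ gI p := by
  by_cases hp : p ∈ Set.Ioo (0:ℝ) 1
  · rw [gI_eq hp]; exact (gphi_pos _).le
  · rw [gI_zero hp]

lemma gI_pos {p : ℝ} (hp : p ∈ Set.Ioo (0:ℝ) 1) : 0 < gI p := by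
  rw [gI_eq hp]; exact (gphi_pos _)

lemma gI_le_one (p : ℝ) : gI p ≤ 1 := by
  by_cases hp : p ∈ Set.Ioo (0:ℝ) 1
  · rw [gI_eq hp]; exact (gphi_le_one _)
  · rw [gI_zero hp]; exact zero_le_one

lemma gI_symm (p : ℝ) : gI (1 - p) = gI p := by
  by_cases hp : p ∈ Set.Ioo (0:ℝ) 1
  · rw [gI_eq hp, gI_eq (by constructor <;> linarith [hp.1, hp.2]), gQ_neg hp, gphi_neg]
  · rw [gI_zero hp, gI_zero]
    intro h; apply hp; constructor <;> linarith [h.1, h.2]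

lemma gQ_deriv {p : ℝ} (hp : p ∈ Set.Ioo (0:ℝ) 1) : HasDerivAt gQ (gI p)⁻¹ p := by
  have h := HasDerivAt.of_local_left_inverse (f := gPhi) (g := gQ) (gQ_contAt hp) (gPhi_deriv (gQ p))
    (gphi_pos _).ne' (by
      filter_upwards [Ioo_mem_nhds hp.1 hp.2] with y hy using gPhi_Q hy)
  rwa [← gI_eq hp] at h

lemma gphi_deriv (x : ℝ) : HasDerivAt gphi (-x * gphi x) x := by
  unfold gphi
  have h : HasDerivAt (fun x : ℝ => -x^2/2) (-x) x := by
    have := ((hasDerivAt_pow 2 x).neg.div_const 2)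
    convert! this using 1; simp; ring
  have := (h.exp).const_mul (√(2 * π))⁻¹
  convert! this using 1; ring

lemma gI_deriv {p : ℝ} (hp : p ∈ Set.Ioo (0:ℝ) 1) : HasDerivAt gI (- gQ p) p := by
  have h := (gphi_deriv (gQ p)).comp p (gQ_deriv hp)
  have e : gI =ᶠ[nhds p] gphi ∘ gQ := by
    filter_upwards [Ioo_mem_nhds hp.1 hp.2] with y hy using gI_eq hy
  have h2 := h.congr_of_eventuallyEq e
  convert! h2 using 1
  rw [← gI_eq hp, mul_assoc, mul_inv_cancel₀ (gI_pos hp).ne', mul_one]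

lemma gphi_anti {x y : ℝ} (h : |x| ≤ |y|) : gphi y ≤ gphi x := by
  unfold gphi
  gcongr ?_ * Real.exp ?_
  have := sq_le_sq.2 h
  linarith

lemma gphi_bot : Filter.Tendsto gphi Filter.atTop (nhds 0) := by
  have : Filter.Tendsto (fun x : ℝ => (√(2 * π))⁻¹ * Real.exp (-(x ^ 2 / 2))) Filter.atTop
      (nhds ((√(2 * π))⁻¹ * 0)) := by
    apply Filter.Tendsto.const_mul
    apply Real.tendsto_exp_neg_atTop_nhds_zero.comp
    exact (Filter.tendsto_pow_atTop (by norm_num)).atTop_div_const (by norm_num)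
  simp only [mul_zero] at this
  convert! this using 2
  simp [gphi, neg_div]

lemma gI_cont_zero : ContinuousAt gI 0 := by
  rw [ContinuousAt, gI_zero (p := 0) (by simp), Metric.tendsto_nhds]
  intro ε hε
  obtain ⟨T, hT⟩ := ((gphi_bot.eventually (gt_mem_nhds hε)).and
    (Filter.eventually_ge_atTop 0)).exists
  filter_upwards [gt_mem_nhds (gPhi_pos (-T))] with p hp
  rw [Real.dist_eq, sub_zero, abs_of_nonneg (gI_nonneg p)]
  by_cases h : p ∈ Set.Ioo (0:ℝ) 1
  · have : gQ p < -T := by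
      rw [← gPhi_strictMono.lt_iff_lt, gPhi_Q h]; exact hp
    rw [gI_eq h]
    refine lt_of_le_of_lt (gphi_anti ?_) hT.1
    rw [abs_of_nonneg hT.2, abs_of_neg (by linarith)]; linarith
  · rw [gI_zero h]; exact hε

lemma gI_cont : Continuous gI := by
  rw [continuous_iff_continuousAt]
  intro p
  by_cases h : p ∈ Set.Ioo (0:ℝ) 1
  · exact (gI_deriv h).continuousAt
  · by_cases h0 : p = 0
    · rw [h0]; exact gI_cont_zero
    by_cases h1 : p = 1
    · have e : gI = fun p => gI (1 - p) := by ext p; rw [gI_symm]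
      rw [h1, e]
      have : ContinuousAt gI ((fun p : ℝ => 1 - p) 1) := by simpa using gI_cont_zero
      exact ContinuousAt.comp this (by fun_prop)
    · have hc : p ∈ (Set.Icc (0:ℝ) 1)ᶜ := by
        intro hh
        exact h ⟨lt_of_le_of_ne hh.1 (Ne.symm h0), lt_of_le_of_ne hh.2 h1⟩
      have : gI =ᶠ[nhds p] fun _ => 0 := by
        filter_upwards [isClosed_Icc.isOpen_compl.mem_nhds hc] with y hy
        exact gI_zero (fun hh => hy (Set.Ioo_subset_Icc_self hh))
      exact continuousAt_const.congr this.symm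

lemma gPhi_tail {t : ℝ} (ht : 0 < t) : gPhi (-t) < 1 / 2 * Real.exp (-t ^ 2 / 2) := by
  set c := (√(2 * π))⁻¹ with hc
  have cpos : 0 < c := by positivity
  set h : ℝ → ℝ := fun t => 1 / 2 * Real.exp (-t ^ 2 / 2) - gPhi (-t) with hh
  have hE : ∀ x, Real.exp (-x ^ 2 / 2) = gphi x / c := by
    intro x; unfold gphi; rw [← hc]; field_simp
  have hd : ∀ x, HasDerivAt h (gphi x * (1 - x / (2 * c))) x := by
    intro x
    have h1 := ((gphi_deriv x).div_const c).const_mul (1/2 : ℝ)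
    have h2 := (gPhi_deriv (-x)).comp x (hasDerivAt_neg x)
    have h3 := h1.sub h2
    have e : h = (fun x => 1 / 2 * (gphi x / c)) - (gPhi ∘ Neg.neg) := by
      ext x; simp [hh, hE]
    rw [e]
    convert! h3 using 1
    rw [gphi_neg]; field_simp; ring
  have hcont : Continuous h := continuous_iff_continuousAt.2 fun x => (hd x).continuousAt
  suffices 0 < h t by simpa [hh] using this
  by_cases hcase : t ≤ 2 * c
  · have : StrictMonoOn h (Set.Icc 0 (2 * c)) := by
      apply strictMonoOn_of_deriv_pos (convex_Icc _ _) hcont.continuousOn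
      intro x hx
      rw [interior_Icc] at hx
      rw [(hd x).deriv]
      apply mul_pos (gphi_pos x)
      rw [sub_pos, div_lt_one (by positivity)]; exact hx.2
    have h0 := this ⟨le_rfl, by positivity⟩ ⟨ht.le, hcase⟩ ht
    have : h 0 = 0 := by simp [hh, gPhi_zero]
    linarith
  · push Not at hcase
    have : StrictAntiOn h (Set.Ici (2 * c)) := by
      apply strictAntiOn_of_deriv_neg (convex_Ici _) hcont.continuousOn
      intro x hx
      rw [interior_Ici] at hx
      rw [(hd x).deriv]
      apply mul_neg_of_pos_of_neg (gphi_pos x)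
      rw [sub_neg, one_lt_div (by positivity)]; exact hx
    have h1 := this hcase.le (show t + 1 ∈ Set.Ici (2*c) from by simp; linarith) (lt_add_one t)
    have hlim : Filter.Tendsto h Filter.atTop (nhds 0) := by
      have a := (gphi_bot.div_const c).const_mul (1/2 : ℝ)
      have b := gPhi_bot.comp Filter.tendsto_neg_atTop_atBot
      have := a.sub b
      simp only [zero_div, mul_zero, sub_zero] at this
      refine this.congr ?_
      intro x; simp [hh, hE]
    have h2 : 0 ≤ h (t + 1) := by
      apply le_of_tendsto hlim
      filter_upwards [Filter.eventually_ge_atTop (t+1)] with y hy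
      exact this.antitoneOn (show t + 1 ∈ Set.Ici (2*c) from by simp; linarith)
        (show y ∈ Set.Ici (2*c) from by simp; linarith) hy
    linarith

lemma mono_aux {f f' : ℝ → ℝ} {b : ℝ} (hf : ∀ x ∈ Set.Ico 0 b, HasDerivAt f (f' x) x)
    (hf' : ∀ x ∈ Set.Ico 0 b, 0 ≤ f' x) {x : ℝ} (hx : x ∈ Set.Ico 0 b) : f 0 ≤ f x := by
  have : MonotoneOn f (Set.Ico 0 b) := by
    apply monotoneOn_of_deriv_nonneg (convex_Ico _ _)
    · intro y hy; exact (hf y hy).continuousAt.continuousWithinAt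
    · intro y hy
      exact (hf y (interior_subset hy)).differentiableAt.differentiableWithinAt
    · intro y hy
      rw [(hf y (interior_subset hy)).deriv]; exact hf' y (interior_subset hy)
  exact this ⟨le_rfl, hx.1.trans_lt hx.2⟩ hx hx.1

/-- derivative of I * Q is 1 - Q^2 -/
lemma IQ_deriv {p : ℝ} (hp : p ∈ Set.Ioo (0:ℝ) 1) :
    HasDerivAt (fun p => gI p * gQ p) (1 - gQ p ^ 2) p := by
  have := (gI_deriv hp).mul (gQ_deriv hp)
  convert! this using 1
  rw [mul_inv_cancel₀ (gI_pos hp).ne']; ring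

lemma I2_deriv {p : ℝ} (hp : p ∈ Set.Ioo (0:ℝ) 1) :
    HasDerivAt (fun p => gI p ^ 2) (-2 * (gI p * gQ p)) p := by
  have := (gI_deriv hp).pow 2
  convert! this using 1
  simp; ring

lemma Q2_deriv {p : ℝ} (hp : p ∈ Set.Ioo (0:ℝ) 1) :
    HasDerivAt (fun p => gQ p ^ 2) (2 * (gQ p / gI p)) p := by
  have := (gQ_deriv hp).pow 2
  convert! this using 1
  simp; ring

lemma plus_deriv {f : ℝ → ℝ} {f' c x : ℝ} (h : HasDerivAt f f' (c + x)) :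
    HasDerivAt (fun x => f (c + x)) f' x := h.comp_const_add c x

lemma minus_deriv {f : ℝ → ℝ} {f' c x : ℝ} (h : HasDerivAt f f' (c - x)) :
    HasDerivAt (fun x => f (c - x)) (-f') x := h.comp_const_sub c x

lemma QI_mono {a b : ℝ} (ha : a ∈ Set.Ioo (0:ℝ) 1) (hb : b ∈ Set.Ioo (0:ℝ) 1) (hab : a ≤ b) :
    gQ a / gI a ≤ gQ b / gI b := by
  have hd : ∀ x, HasDerivAt (fun x => x / gphi x) ((1 + x ^ 2) / gphi x) x := by
    intro x
    have := (hasDerivAt_id x).div (gphi_deriv x) (gphi_pos x).ne'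
    convert! this using 1
    have := (gphi_pos x).ne'
    simp only [id]; field_simp; ring
  have hm : Monotone (fun x => x / gphi x) := by
    apply monotone_of_deriv_nonneg (fun x => (hd x).differentiableAt)
    intro x; rw [(hd x).deriv]; have := gphi_pos x; positivity
  rw [gI_eq ha, gI_eq hb]
  exact hm (gQ_strictMonoOn.monotoneOn ha hb hab)

lemma two_point_half {c x : ℝ} (hc : 1 / 2 ≤ c) (hc1 : c < 1) (hx : x ∈ Set.Ico 0 (1 - c)) :
    gI c ≤ 1 / 2 * √(gI (c + x) ^ 2 + x ^ 2) + 1 / 2 * √(gI (c - x) ^ 2 + x ^ 2) := by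
  have hcm : c ∈ Set.Ioo (0:ℝ) 1 := ⟨by linarith, hc1⟩
  have hp : ∀ y ∈ Set.Ico 0 (1 - c), c + y ∈ Set.Ioo (0:ℝ) 1 := fun y hy =>
    ⟨by linarith [hy.1], by linarith [hy.2]⟩
  have hm : ∀ y ∈ Set.Ico 0 (1 - c), c - y ∈ Set.Ioo (0:ℝ) 1 := fun y hy =>
    ⟨by linarith [hy.2], by linarith [hy.1]⟩
  have hQc : 0 ≤ gQ c := by
    rw [← gPhi_strictMono.le_iff_le, gPhi_Q hcm, gPhi_zero]; exact hc
  -- comparison of Q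
  have hQ : ∀ y ∈ Set.Ico 0 (1 - c), gQ (c - y) ^ 2 ≤ gQ (c + y) ^ 2 := by
    intro y hy
    have h1 : gQ (c - y) ≤ gQ (c + y) :=
      gQ_strictMonoOn.monotoneOn (hm y hy) (hp y hy) (by linarith [hy.1])
    have h2 : gQ (1 - (c - y)) ≤ gQ (c + y) := by
      have := hm y hy
      exact gQ_strictMonoOn.monotoneOn ⟨by linarith [this.2], by linarith [this.1]⟩ (hp y hy)
        (by linarith [hy.1])
    rw [gQ_neg (hm y hy)] at h2
    apply sq_le_sq'  <;> linarith
  -- step a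
  have hIQ : ∀ y ∈ Set.Ico 0 (1 - c),
      gI (c + y) * gQ (c + y) + gI (c - y) * gQ (c - y) ≤ 2 * (gI c * gQ c) := by
    intro y hy
    have := mono_aux (f := fun y => 2 * (gI c * gQ c) -
      (gI (c + y) * gQ (c + y) + gI (c - y) * gQ (c - y)))
      (f' := fun y => 0 - ((1 - gQ (c + y) ^ 2) + -(1 - gQ (c - y) ^ 2))) (b := 1 - c)
      (fun z hz => ((plus_deriv (IQ_deriv (hp z hz))).add
        (minus_deriv (IQ_deriv (hm z hz)))).const_sub _ |>.congr_deriv (by ring))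
      (fun z hz => by have := hQ z hz; linarith) hy
    simp only [add_zero, sub_zero] at this
    linarith
  have ha1 : gI (c - x) ^ 2 - gI (c + x) ^ 2 ≤ 4 * (gI c * gQ c) * x := by
    have := mono_aux (f := fun y => 4 * (gI c * gQ c) * y -
      (gI (c - y) ^ 2 - gI (c + y) ^ 2))
      (f' := fun y => 4 * (gI c * gQ c) * 1 - (-(-2 * (gI (c - y) * gQ (c - y)))
        - (-2 * (gI (c + y) * gQ (c + y))))) (b := 1 - c)
      (fun z hz => ((hasDerivAt_id z).const_mul _).sub ((minus_deriv (I2_deriv (hm z hz))).sub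
        (plus_deriv (I2_deriv (hp z hz)))))
      (fun z hz => by have := hIQ z hz; linarith) hx
    simp only [add_zero, sub_zero, mul_zero] at this
    linarith
  have ha2 : 0 ≤ gI (c - x) ^ 2 - gI (c + x) ^ 2 := by
    have : gI (c + x) ≤ gI (c - x) := by
      rw [gI_eq (hp x hx), gI_eq (hm x hx)]
      exact gphi_anti (sq_le_sq.1 (hQ x hx))
    have := pow_le_pow_left₀ (gI_nonneg _) this 2
    linarith
  -- step b
  have hb1 : ∀ y ∈ Set.Ico 0 (1 - c), 0 ≤ gQ (c + y) ^ 2 + gQ (c - y) ^ 2 - 2 * gQ c ^ 2 := by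
    intro y hy
    have := mono_aux (f := fun y => (gQ (c + y) ^ 2 + gQ (c - y) ^ 2))
      (f' := fun y => 2 * (gQ (c + y) / gI (c + y)) + -(2 * (gQ (c - y) / gI (c - y)))) (b := 1 - c)
      (fun z hz => (plus_deriv (Q2_deriv (hp z hz))).add (minus_deriv (Q2_deriv (hm z hz))))
      (fun z hz => by
        have := QI_mono (hm z hz) (hp z hz) (by linarith [hz.1]); linarith) hy
    simp only [add_zero, sub_zero] at this
    linarith
  have hb2 : ∀ y ∈ Set.Ico 0 (1 - c),
      0 ≤ -2 * (gI (c + y) * gQ (c + y)) + 2 * (gI (c - y) * gQ (c - y)) + 4 * y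
        - 4 * gQ c ^ 2 * y := by
    intro y hy
    have := mono_aux (f := fun y => -2 * (gI (c + y) * gQ (c + y)) + 2 * (gI (c - y) * gQ (c - y))
        + 4 * y - 4 * gQ c ^ 2 * y)
      (f' := fun y => -2 * (1 - gQ (c + y) ^ 2) + 2 * (-(1 - gQ (c - y) ^ 2))
        + 4 * 1 - 4 * gQ c ^ 2 * 1) (b := 1 - c)
      (fun z hz => ((((plus_deriv (IQ_deriv (hp z hz))).const_mul _).add
        ((minus_deriv (IQ_deriv (hm z hz))).const_mul _)).add
          ((hasDerivAt_id z).const_mul _)).sub ((hasDerivAt_id z).const_mul _))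
      (fun z hz => by
        have := hb1 z hz; linarith) hy
    simp only [add_zero, sub_zero, mul_zero] at this
    linarith
  have hb : 2 * gI c ^ 2 + 2 * gQ c ^ 2 * x ^ 2 ≤ gI (c + x) ^ 2 + gI (c - x) ^ 2 + 2 * x ^ 2 := by
    have := mono_aux (f := fun y => gI (c + y) ^ 2 + gI (c - y) ^ 2
        + 2 * y ^ 2 - 2 * gQ c ^ 2 * y ^ 2)
      (f' := fun y => (-2 * (gI (c + y) * gQ (c + y))) + (-(-2 * (gI (c - y) * gQ (c - y))))
        + 2 * (2 * y) - 2 * gQ c ^ 2 * (2 * y)) (b := 1 - c)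
      (fun z hz => by
        have hz2 : HasDerivAt (fun y : ℝ => y ^ 2) (2 * z) z := by
          simpa using hasDerivAt_pow 2 z
        exact ((((plus_deriv (I2_deriv (hp z hz)))).add
          ((minus_deriv (I2_deriv (hm z hz))))).add
          (hz2.const_mul _)).sub (hz2.const_mul _))
      (fun z hz => by
        have := hb2 z hz; linarith) hx
    simp only [add_zero, sub_zero] at this
    nlinarith
  -- conclude
  set A := gI (c + x) ^ 2 + x ^ 2 with hA
  set B := gI (c - x) ^ 2 + x ^ 2 with hB
  have hA0 : 0 ≤ A := by positivity
  have hB0 : 0 ≤ B := by positivity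
  have hI := gI_nonneg c
  have key : (B - A) ^ 2 ≤ 8 * gI c ^ 2 * (A + B - 2 * gI c ^ 2) := by
    have h1 : (B - A) ^ 2 ≤ (4 * (gI c * gQ c) * x) ^ 2 := by
      apply pow_le_pow_left₀ <;> linarith
    have h2 : 2 * gQ c ^ 2 * x ^ 2 ≤ A + B - 2 * gI c ^ 2 := by linarith
    have h3 := mul_le_mul_of_nonneg_left h2 (show 0 ≤ 8 * gI c ^ 2 by positivity)
    nlinarith
  suffices 2 * gI c ≤ √A + √B by linarith
  apply abs_le_of_sq_le_sq' _ (by positivity) |>.2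
  have sA := Real.sq_sqrt hA0
  have sB := Real.sq_sqrt hB0
  suffices 4 * gI c ^ 2 - (A + B) ≤ 2 * (√A * √B) by nlinarith
  apply abs_le_of_sq_le_sq' _ (by positivity) |>.2
  have : (2 * (√A * √B)) ^ 2 = 4 * (A * B) := by
    rw [mul_pow, mul_pow, sA, sB]; ring
  rw [this]
  nlinarith

lemma two_point_open {a b : ℝ} (ha : a ∈ Set.Ioo (0:ℝ) 1) (hb : b ∈ Set.Ioo (0:ℝ) 1) :
    gI ((a + b) / 2) ≤ 1 / 2 * √(gI a ^ 2 + ((a - b) / 2) ^ 2) +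
      1 / 2 * √(gI b ^ 2 + ((a - b) / 2) ^ 2) := by
  wlog hab : b ≤ a generalizing a b
  · have := this hb ha (by linarith)
    rw [add_comm b a, show ((b - a) / 2) ^ 2 = ((a - b)/2)^2 by ring] at this
    linarith
  by_cases hc : 1 / 2 ≤ (a + b) / 2
  · have := two_point_half (c := (a + b)/2) (x := (a - b)/2) hc (by linarith [ha.2, hb.2])
      ⟨by linarith, by linarith [ha.2]⟩
    rwa [show (a + b)/2 + (a-b)/2 = a by ring, show (a + b)/2 - (a-b)/2 = b by ring] at this
  · have := two_point_half (c := 1 - (a + b)/2) (x := (a - b)/2) (by linarith)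
      (by linarith [ha.1, hb.1])
      ⟨by linarith, by linarith [hb.1]⟩
    rw [show 1 - (a + b)/2 + (a-b)/2 = 1 - b by ring,
      show 1 - (a + b)/2 - (a-b)/2 = 1 - a by ring, gI_symm, gI_symm, gI_symm] at this
    linarith

lemma two_point {a b : ℝ} (ha : a ∈ Set.Icc (0:ℝ) 1) (hb : b ∈ Set.Icc (0:ℝ) 1) :
    gI ((a + b) / 2) ≤ 1 / 2 * √(gI a ^ 2 + ((a - b) / 2) ^ 2) +
      1 / 2 * √(gI b ^ 2 + ((a - b) / 2) ^ 2) := by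
  have hI := gI_cont
  have hcl : IsClosed {q : ℝ × ℝ | gI ((q.1 + q.2) / 2) ≤
      1 / 2 * √(gI q.1 ^ 2 + ((q.1 - q.2) / 2) ^ 2) +
      1 / 2 * √(gI q.2 ^ 2 + ((q.1 - q.2) / 2) ^ 2)} :=
    isClosed_le (by fun_prop) (by fun_prop)
  have hsub : Set.Ioo (0:ℝ) 1 ×ˢ Set.Ioo (0:ℝ) 1 ⊆ {q : ℝ × ℝ | gI ((q.1 + q.2) / 2) ≤
      1 / 2 * √(gI q.1 ^ 2 + ((q.1 - q.2) / 2) ^ 2) +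
      1 / 2 * √(gI q.2 ^ 2 + ((q.1 - q.2) / 2) ^ 2)} := fun q hq => two_point_open hq.1 hq.2
  have := closure_minimal hsub hcl
  rw [closure_prod_eq, closure_Ioo zero_ne_one] at this
  exact this (show (a, b) ∈ _ from ⟨ha, hb⟩)

lemma l2_tri {ι : Type*} [Fintype ι] (u v : ℝ) (a b : ι → ℝ) :
    √((u + v) ^ 2 + ∑ i, (a i + b i) ^ 2) ≤ √(u ^ 2 + ∑ i, a i ^ 2) + √(v ^ 2 + ∑ i, b i ^ 2) := by
  have h := norm_add_le (WithLp.toLp 2 (fun o : Option ι => o.elim u a))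
    (WithLp.toLp 2 (fun o : Option ι => o.elim v b))
  simpa [EuclideanSpace.norm_eq, Fintype.sum_option] using h

open Classical in
def CubeB (ι : Type) [Fintype ι] : Prop :=
  ∀ f : (ι → Bool) → ℝ, (∀ ω, f ω ∈ Set.Icc (0:ℝ) 1) →
    gI ((∑ ω, f ω) / 2 ^ Fintype.card ι) ≤
      (∑ ω, √(gI (f ω) ^ 2 + ∑ i, ((f ω - f (Function.update ω i (!ω i))) / 2) ^ 2)) /
        2 ^ Fintype.card ι

open Classical in
lemma cubeB_equiv {α β : Type} [Fintype α] [Fintype β] (e : α ≃ β) (h : CubeB α) : CubeB β := by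
  intro f hf
  have := h (fun ω => f (ω ∘ e.symm)) (fun ω => hf _)
  rw [Fintype.card_congr e] at this
  have e1 : ∑ ω : α → Bool, f (ω ∘ e.symm) = ∑ ω, f ω :=
    Fintype.sum_equiv (e.arrowCongr (Equiv.refl _)) _ _ (fun ω => rfl)
  rw [e1] at this
  refine this.trans_eq ?_
  congr 1
  apply Fintype.sum_equiv (e.arrowCongr (Equiv.refl _))
  intro ω
  have : (e.arrowCongr (Equiv.refl _)) ω = ω ∘ e.symm := rfl
  rw [this]
  congr 2
  apply Fintype.sum_equiv e
  intro i
  congr 4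
  ext j
  by_cases hj : j = e i
  · subst hj; simp
  · have : e.symm j ≠ i := fun h => hj (by rw [← h]; simp)
    simp [Function.update_of_ne hj, Function.update_of_ne this]

def ocons {ι : Type} (b : Bool) (ω : ι → Bool) : Option ι → Bool := fun o => o.elim b ω

lemma ou0 {α : Type} {_ : DecidableEq (Option α)} (b) (ω : α → Bool) :
    Function.update (ocons b ω) none (!(ocons b ω none)) = ocons (!b) ω := by
  ext o; cases o <;> simp [ocons]

lemma ou1 {α : Type} {_ : DecidableEq α} {_ : DecidableEq (Option α)} (b) (ω : α → Bool) (i : α) :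
    Function.update (ocons b ω) (some i) (!(ocons b ω (some i)))
      = ocons b (Function.update ω i (!ω i)) := by
  ext o
  cases o with
  | none => simp [ocons]
  | some j => by_cases hj : j = i
              · subst hj; simp [ocons]
              · simp [ocons, hj]

lemma osum {ι : Type} [Fintype ι] {x : DecidableEq ι} {_ : DecidableEq (Option ι)} (F : (Option ι → Bool) → ℝ) :
    ∑ ω, F ω = ∑ ω : ι → Bool, (F (ocons true ω) + F (ocons false ω)) := by
  rw [Fintype.sum_equiv (Equiv.piOptionEquivProd (β := fun _ => Bool)) F
    (fun q => F (ocons q.1 q.2)), Fintype.sum_prod_type, Fintype.sum_bool, Finset.sum_add_distrib]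
  intro ω
  congr 1
  ext o
  cases o <;> rfl

open Classical in
lemma cubeB_option {α : Type} [Fintype α] (h : CubeB α) : CubeB (Option α) := by
  intro f hf
  have hc : (2:ℝ) ^ Fintype.card (Option α) = 2 * 2 ^ Fintype.card α := by
    rw [Fintype.card_option]; ring
  rw [hc, osum (ι := α) (x := fun a b => Classical.propDecidable _), osum (ι := α) (x := fun a b => Classical.propDecidable _)]
  have hg : ∀ ω, (f (ocons true ω) + f (ocons false ω)) / 2 ∈ Set.Icc (0:ℝ) 1 := fun ω => by
    have h1 := hf (ocons true ω)
    have h2 := hf (ocons false ω)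
    constructor <;> linarith [h1.1, h1.2, h2.1, h2.2]
  have H := h (fun ω => (f (ocons true ω) + f (ocons false ω)) / 2) hg
  have e2 : (∑ ω : α → Bool, (f (ocons true ω) + f (ocons false ω))) / (2 * 2 ^ Fintype.card α) =
      (∑ ω : α → Bool, (f (ocons true ω) + f (ocons false ω)) / 2) / 2 ^ Fintype.card α := by
    rw [← Finset.sum_div, div_div]
  rw [e2]
  refine H.trans ?_
  rw [← div_div]
  apply div_le_div_of_nonneg_right _ (by positivity)
  rw [Finset.sum_div]
  apply Finset.sum_le_sum; intro ω _
  set ft := fun ω : α → Bool => f (ocons true ω)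
  set ff := fun ω : α → Bool => f (ocons false ω)
  simp only [Fintype.sum_option, ou0, ou1, Bool.not_true, Bool.not_false]
  have tp := two_point (hf (ocons true ω)) (hf (ocons false ω))
  set d := (f (ocons true ω) - f (ocons false ω)) / 2 with hd
  have tri := l2_tri (√(gI (f (ocons true ω)) ^ 2 + d ^ 2) / 2)
    (√(gI (f (ocons false ω)) ^ 2 + d ^ 2) / 2)
    (fun i => (f (ocons true ω) - f (ocons true (Function.update ω i (!ω i)))) / 2 / 2)
    (fun i => (f (ocons false ω) - f (ocons false (Function.update ω i (!ω i)))) / 2 / 2)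
  have sc : ∀ (u : ℝ) (a : α → ℝ), √((u / 2) ^ 2 + ∑ i, (a i / 2) ^ 2) = √(u ^ 2 + ∑ i, a i ^ 2) / 2 := by
    intro u a
    rw [show (u / 2) ^ 2 + ∑ i, (a i / 2) ^ 2 = (u ^ 2 + ∑ i, a i ^ 2) / 2 ^ 2 by
      simp only [div_pow, ← Finset.sum_div]; ring]
    rw [Real.sqrt_div' _ (by positivity), Real.sqrt_sq (by norm_num)]
  rw [sc, sc, Real.sq_sqrt (by positivity), Real.sq_sqrt (by positivity)] at tri
  have d2 : ((f (ocons false ω) - f (ocons true ω)) / 2) ^ 2 = d ^ 2 := by rw [hd]; ring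
  rw [d2, ← add_assoc, ← add_assoc]
  refine le_trans ?_ (tri.trans_eq (add_div _ _ _).symm)
  apply Real.sqrt_le_sqrt
  apply add_le_add
  · apply pow_le_pow_left₀ (gI_nonneg _)
    linarith
  · apply le_of_eq
    apply Finset.sum_congr rfl
    intro i _
    ring

lemma cubeB_all (α : Type) [Fintype α] : CubeB α := by
  refine Fintype.induction_empty_option (P := fun α _ => CubeB α) ?_ ?_ ?_ α
  · intro α β _ e h
    let _ := Fintype.ofEquiv β e.symm
    exact cubeB_equiv e h
  · intro f hf
    simp only [Finset.univ_unique, Finset.sum_singleton, Fintype.card_eq_zero, pow_zero, div_one,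
      Finset.univ_eq_empty, Finset.sum_empty, add_zero]
    rw [Real.sqrt_sq (gI_nonneg _)]
  · intro α _ h
    exact cubeB_option h

lemma cubeB_dec {ι : Type} [Fintype ι] [DecidableEq ι] (f : (ι → Bool) → ℝ)
    (hf : ∀ ω, f ω ∈ Set.Icc (0:ℝ) 1) :
    gI ((∑ ω, f ω) / 2 ^ Fintype.card ι) ≤
      (∑ ω, √(gI (f ω) ^ 2 + ∑ i, ((f ω - f (Function.update ω i (!ω i))) / 2) ^ 2)) /
        2 ^ Fintype.card ι := by
  have := cubeB_all ι f hf
  convert! this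

def sgnB (b : Bool) : ℝ := if b then 1 else -1

noncomputable def cltX (n N : ℕ) (ω : Fin n × Fin N → Bool) : EuclideanSpace ℝ (Fin n) :=
  WithLp.toLp 2 (fun i => ∑ j, sgnB (ω (i, j)) / √N)

noncomputable def cltM (n N : ℕ) : Measure (EuclideanSpace ℝ (Fin n)) :=
  ∑ ω : Fin n × Fin N → Bool, (ENNReal.ofReal ((2 ^ Fintype.card (Fin n × Fin N) : ℝ)⁻¹)) •
    Measure.dirac (cltX n N ω)

instance cltM_prob (n N : ℕ) : IsProbabilityMeasure (cltM n N) := by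
  constructor
  rw [cltM, Measure.finsetSum_apply]
  simp only [Measure.smul_apply, measure_univ, smul_eq_mul, mul_one, Finset.sum_const, nsmul_eq_mul]
  rw [← ENNReal.ofReal_natCast, ← ENNReal.ofReal_mul (by positivity)]
  simp

lemma cltM_integral {F : Type*} [NormedAddCommGroup F] [NormedSpace ℝ F] [CompleteSpace F] (n N : ℕ)
    (h : EuclideanSpace ℝ (Fin n) → F) :
    ∫ x, h x ∂(cltM n N) = (2 ^ Fintype.card (Fin n × Fin N) : ℝ)⁻¹ • ∑ ω, h (cltX n N ω) := by
  rw [cltM, integral_finsetSum_measure]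
  · simp only [integral_smul_measure, integral_dirac, Finset.smul_sum]
    rw [ENNReal.toReal_ofReal (by positivity)]
  · intro ω _
    apply Integrable.smul_measure _ ENNReal.ofReal_ne_top
    exact integrable_dirac (by simp)

lemma cos_pow_tendsto (t : ℝ) :
    Filter.Tendsto (fun N : ℕ => Real.cos (t / √N) ^ N) Filter.atTop (nhds (Real.exp (-t ^ 2 / 2))) := by
  have := Real.tendsto_one_add_pow_exp_of_tendsto (g := fun N : ℕ => Real.cos (t / √N) - 1)
    (t := -t ^ 2 / 2) ?_
  · refine this.congr ?_
    intro N; ring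
  · rw [tendsto_iff_dist_tendsto_zero]
    have hlim : Filter.Tendsto (fun N : ℕ => t ^ 4 * (5/96) / (N:ℝ)) Filter.atTop (nhds 0) :=
      tendsto_const_div_atTop_nhds_zero_nat _
    refine squeeze_zero' (Filter.Eventually.of_forall fun _ => dist_nonneg) ?_ hlim
    have h1 : ∀ᶠ N : ℕ in Filter.atTop, t ^ 2 ≤ N :=
      (tendsto_natCast_atTop_atTop).eventually_ge_atTop _
    filter_upwards [h1, Filter.eventually_gt_atTop 0] with N hN hN0
    have hNp : (0:ℝ) < N := by exact_mod_cast hN0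
    have hs : √(N:ℝ) ^ 2 = N := Real.sq_sqrt hNp.le
    have hsp : 0 < √(N:ℝ) := Real.sqrt_pos.2 hNp
    have hx2 : (t / √N) ^ 2 = t ^ 2 / N := by rw [div_pow, hs]
    have hx : |t / √N| ≤ 1 := by
      rw [← sq_le_one_iff_abs_le_one, hx2, div_le_one hNp]; exact hN
    have hb := Real.cos_bound hx
    have h4 : |t / √N| ^ 4 = t ^ 4 / N ^ 2 := by
      rw [show |t / √N| ^ 4 = (|t / √N| ^ 2) ^ 2 by ring, sq_abs, hx2]; ring
    rw [h4, hx2] at hb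
    rw [Real.dist_eq, show (N:ℝ) * (Real.cos (t / √N) - 1) - -t ^ 2 / 2 =
      N * (Real.cos (t / √N) - (1 - t ^ 2 / N / 2)) by field_simp; ring, abs_mul, abs_of_pos hNp]
    calc (N:ℝ) * |Real.cos (t / √N) - (1 - t ^ 2 / N / 2)| ≤ N * (t ^ 4 / N ^ 2 * (5/96)) := by gcongr
      _ = _ := by field_simp

lemma clt_charFun (n N : ℕ) (t : EuclideanSpace ℝ (Fin n)) :
    charFun (cltM n N) t = ((∏ i, Real.cos (t i / √N) ^ N : ℝ) : ℂ) := by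
  rw [charFun_apply, cltM_integral]
  have h1 : ∀ ω, Complex.exp ((inner ℝ (cltX n N ω) t : ℝ) * Complex.I) =
      ∏ q : Fin n × Fin N, Complex.exp ((sgnB (ω q) * (t q.1 / √N) : ℝ) * Complex.I) := by
    intro ω
    rw [← Complex.exp_sum, ← Finset.sum_mul, ← Complex.ofReal_sum, Fintype.sum_prod_type]
    congr 3
    simp only [cltX, PiLp.inner_apply, RCLike.inner_apply, conj_trivial, Finset.mul_sum]
    congr 1; ext i; congr 1; ext j; ring
  simp only [h1]
  rw [← Fintype.prod_sum (fun (q : Fin n × Fin N) (b : Bool) =>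
    Complex.exp ((sgnB b * (t q.1 / √N) : ℝ) * Complex.I))]
  have h2 : ∀ q : Fin n × Fin N, ∑ b, Complex.exp ((sgnB b * (t q.1 / √N) : ℝ) * Complex.I) =
      2 * Complex.cos ((t q.1 / √N : ℝ) : ℂ) := by
    intro q
    rw [Complex.two_cos]
    simp [sgnB]
  simp only [h2]
  rw [Finset.prod_mul_distrib, Finset.prod_const, Finset.card_univ, Fintype.prod_prod_type]
  rw [Complex.real_smul, ← mul_assoc]
  push_cast
  rw [inv_mul_cancel₀ (pow_ne_zero _ two_ne_zero), one_mul]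
  simp

lemma clt_tendsto (n : ℕ) (h : BoundedContinuousFunction (EuclideanSpace ℝ (Fin n)) ℝ) :
    Filter.Tendsto (fun N => ∫ x, h x ∂(cltM n N)) Filter.atTop
      (nhds (∫ x, h x ∂(ProbabilityTheory.stdGaussian (EuclideanSpace ℝ (Fin n))))) := by
  let ms : ℕ → ProbabilityMeasure (EuclideanSpace ℝ (Fin n)) := fun N => ⟨cltM n N, cltM_prob n N⟩
  let m0 : ProbabilityMeasure (EuclideanSpace ℝ (Fin n)) :=
    ⟨ProbabilityTheory.stdGaussian (EuclideanSpace ℝ (Fin n)), inferInstance⟩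
  have : Filter.Tendsto ms Filter.atTop (nhds m0) := by
    apply ProbabilityMeasure.tendsto_of_tendsto_charFun
    intro t
    simp only [ms, m0, ProbabilityMeasure.coe_mk, clt_charFun, ProbabilityTheory.charFun_stdGaussian]
    have e : Complex.exp (-(‖t‖:ℂ) ^ 2 / 2) = ((∏ i, Real.exp (-(t i) ^ 2 / 2) : ℝ) : ℂ) := by
      rw [← Real.exp_sum, ← Finset.sum_div, Finset.sum_neg_distrib, ← EuclideanSpace.real_norm_sq_eq]
      push_cast; rfl
    rw [e]
    apply (Complex.continuous_ofReal.tendsto _).comp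
    exact tendsto_finset_prod _ (fun i _ => cos_pow_tendsto (t i))
  exact ProbabilityMeasure.tendsto_iff_forall_integral_tendsto.1 this h

lemma cltX_flip (n N : ℕ) (ω : Fin n × Fin N → Bool) (q : Fin n × Fin N) :
    cltX n N (Function.update ω q (!ω q)) =
      cltX n N ω + (-2 * sgnB (ω q) / √N) • EuclideanSpace.single q.1 (1:ℝ) := by
  obtain ⟨i, j⟩ := q
  ext i'
  by_cases hi : i' = i
  · subst hi
    simp only [cltX, PiLp.add_apply, PiLp.smul_apply, EuclideanSpace.single_apply, if_true,
      smul_eq_mul, mul_one]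
    rw [← Finset.add_sum_erase _ _ (Finset.mem_univ j),
      ← Finset.add_sum_erase (a := j) _ (fun j => sgnB (ω (i', j)) / √N) (Finset.mem_univ j)]
    rw [Finset.sum_congr rfl (g := fun j => sgnB (ω (i', j)) / √N)]
    · rw [Function.update_self]
      have : sgnB (!ω (i', j)) = - sgnB (ω (i', j)) := by
        cases ω (i', j) <;> simp [sgnB]
      rw [this]; ring
    · intro j' hj'
      rw [Function.update_of_ne]
      intro h; simp at h; simp [h] at hj'
  · simp only [cltX, PiLp.add_apply, PiLp.smul_apply, EuclideanSpace.single_apply, if_neg hi,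
      smul_zero, add_zero]
    apply Finset.sum_congr rfl
    intro j' _
    rw [Function.update_of_ne]
    intro h; simp at h; exact hi h.1

lemma gauss_bobkov (n : ℕ) (k : EuclideanSpace ℝ (Fin n) → ℝ)
    (k' : Fin n → EuclideanSpace ℝ (Fin n) → ℝ)
    (hk : Continuous k) (hk' : ∀ i, Continuous (k' i)) (h01 : ∀ x, k x ∈ Set.Icc (0:ℝ) 1)
    (L : ℝ) (hL : ∀ i x, |k' i x| ≤ L)
    (hexp : ∀ η > 0, ∃ h0 > 0, ∀ x i h, |h| ≤ h0 →
      |k (x + h • EuclideanSpace.single i (1:ℝ)) - k x - h * k' i x| ≤ η * |h|) :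
    gI (∫ x, k x ∂(ProbabilityTheory.stdGaussian (EuclideanSpace ℝ (Fin n)))) ≤
      ∫ x, √(gI (k x) ^ 2 + ∑ i, k' i x ^ 2)
        ∂(ProbabilityTheory.stdGaussian (EuclideanSpace ℝ (Fin n))) := by
  have hIc := gI_cont
  set γ := ProbabilityTheory.stdGaussian (EuclideanSpace ℝ (Fin n)) with hγ
  set G : ℝ → EuclideanSpace ℝ (Fin n) → ℝ := fun η x =>
    √(gI (k x) ^ 2 + ∑ i, (|k' i x| + η) ^ 2) with hG
  have hGc : ∀ η, Continuous (G η) := fun η => by simp only [hG]; fun_prop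
  have hGb : ∀ η, 0 ≤ η → ∀ x, ‖G η x‖ ≤ √(1 + ∑ i : Fin n, (L + η) ^ 2) := by
    intro η hη x
    rw [Real.norm_eq_abs, abs_of_nonneg (Real.sqrt_nonneg _)]
    apply Real.sqrt_le_sqrt
    gcongr with i _
    · exact pow_le_one₀ (gI_nonneg _) (gI_le_one _)
    · exact hL i x
  have hGi : ∀ η, 0 ≤ η → Integrable (G η) γ := fun η hη =>
    Integrable.of_bound (hGc η).aestronglyMeasurable _ (Filter.Eventually.of_forall (hGb η hη))
  have main : ∀ η > 0, gI (∫ x, k x ∂γ) ≤ ∫ x, G η x ∂γ := by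
    intro η hη
    obtain ⟨h0, hh0, H⟩ := hexp η hη
    let kb := BoundedContinuousFunction.ofNormedAddCommGroup k hk 1 (fun x => by
      rw [Real.norm_eq_abs, abs_of_nonneg (h01 x).1]; exact (h01 x).2)
    let Gb := BoundedContinuousFunction.ofNormedAddCommGroup (G η) (hGc η) _ (hGb η hη.le)
    have t1 := (hIc.tendsto _).comp (clt_tendsto n kb)
    have t2 := clt_tendsto n Gb
    refine le_of_tendsto_of_tendsto t1 t2 ?_
    have hev : ∀ᶠ N : ℕ in Filter.atTop, 2 / h0 ≤ √(N:ℝ) :=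
      (Real.tendsto_sqrt_atTop.comp tendsto_natCast_atTop_atTop).eventually_ge_atTop _
    filter_upwards [hev] with N hN
    have hsp : 0 < √(N:ℝ) := lt_of_lt_of_le (by positivity) hN
    have hNp : (0:ℝ) < N := Real.sqrt_pos.1 hsp
    have hs : √(N:ℝ) ^ 2 = N := Real.sq_sqrt hNp.le
    have h2N : 2 / √(N:ℝ) ≤ h0 := by
      rw [div_le_iff₀ hsp]; rw [div_le_iff₀ hh0] at hN; linarith
    simp only [Function.comp]
    have B := cubeB_dec (fun ω => k (cltX n N ω)) (fun ω => h01 _)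
    rw [cltM_integral, cltM_integral, smul_eq_mul, smul_eq_mul, inv_mul_eq_div, inv_mul_eq_div]
    refine B.trans ?_
    apply div_le_div_of_nonneg_right _ (by positivity)
    apply Finset.sum_le_sum
    intro ω _
    show _ ≤ √(gI (k (cltX n N ω)) ^ 2 + ∑ i, (|k' i (cltX n N ω)| + η) ^ 2)
    apply Real.sqrt_le_sqrt
    gcongr
    set x := cltX n N ω
    have : ∀ q : Fin n × Fin N, ((k x - k (cltX n N (Function.update ω q (!ω q)))) / 2) ^ 2 ≤
        (|k' q.1 x| + η) ^ 2 / N := by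
      intro q
      rw [cltX_flip]
      set h := -2 * sgnB (ω q) / √N with hh
      have habs : |h| = 2 / √N := by
        rw [hh, abs_div, abs_mul, abs_of_pos hsp]
        congr 1
        cases ω q <;> simp [sgnB]
      have h3 := H x q.1 h (by rw [habs]; exact h2N)
      have h4 : |(k x - k (x + h • EuclideanSpace.single q.1 (1:ℝ))) / 2| ≤
          (|k' q.1 x| + η) / √N := by
        have e : (k x - k (x + h • EuclideanSpace.single q.1 (1:ℝ))) / 2 =
          (-(k (x + h • EuclideanSpace.single q.1 (1:ℝ)) - k x - h * k' q.1 x) - h * k' q.1 x) / 2 := by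
          ring
        rw [e, abs_div, abs_two]
        have h5 := abs_sub (-(k (x + h • EuclideanSpace.single q.1 (1:ℝ)) - k x - h * k' q.1 x))
          (h * k' q.1 x)
        rw [abs_neg, abs_mul h] at h5
        rw [habs] at h5 h3
        rw [div_le_iff₀ two_pos]
        refine h5.trans ((add_le_add_left h3 _).trans_eq ?_)
        ring
      rw [← sq_abs]
      refine (pow_le_pow_left₀ (abs_nonneg _) h4 2).trans_eq ?_
      rw [div_pow, hs]
    refine (Finset.sum_le_sum fun q _ => this q).trans_eq ?_
    rw [Fintype.sum_prod_type]
    apply Finset.sum_congr rfl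
    intro i _
    simp only [Finset.sum_const, Finset.card_univ, Fintype.card_fin, nsmul_eq_mul]
    field_simp
  have hle : ∀ η ≥ 0, ∀ x, G η x ≤ G 0 x + √n * η := by
    intro η hη x
    have := l2_tri (gI (k x)) 0 (fun i => |k' i x|) (fun _ : Fin n => η)
    simp only [hG, add_zero] at this ⊢
    refine this.trans_eq ?_
    congr 1
    simp only [Finset.sum_const, Finset.card_univ, Fintype.card_fin, nsmul_eq_mul]
    rw [zero_pow two_ne_zero, zero_add, Real.sqrt_mul (by positivity), Real.sqrt_sq hη]
  have hG0 : ∀ x, G 0 x = √(gI (k x) ^ 2 + ∑ i, k' i x ^ 2) := by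
    intro x; simp [hG]
  simp only [← hG0]
  have fin : ∀ η > 0, gI (∫ x, k x ∂γ) ≤ (∫ x, G 0 x ∂γ) + √n * η := by
    intro η hη
    refine (main η hη).trans ?_
    have : (∫ x, G 0 x ∂γ) + √n * η = ∫ x, (G 0 x + √n * η) ∂γ := by
      rw [integral_add (hGi 0 le_rfl) (integrable_const _)]; simp
    rw [this]
    exact integral_mono (hGi η hη.le) ((hGi 0 le_rfl).add (integrable_const _)) (hle η hη.le)
  have ht : Filter.Tendsto (fun η : ℝ => (∫ x, G 0 x ∂γ) + √n * η) (nhdsWithin 0 (Set.Ioi 0))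
      (nhds ((∫ x, G 0 x ∂γ) + √n * 0)) := by
    apply Filter.Tendsto.mono_left _ nhdsWithin_le_nhds
    exact Continuous.tendsto (by fun_prop) 0
  rw [mul_zero, add_zero] at ht
  exact ge_of_tendsto ht (by filter_upwards [self_mem_nhdsWithin] with η hη using fin η hη)

lemma mollify {n : ℕ} (q : EuclideanSpace ℝ (Fin n) → ℝ) (L : NNReal) (hq : LipschitzWith L q)
    (h01 : ∀ x, q x ∈ Set.Icc (0:ℝ) 1) (η : ℝ) (hη : 0 < η) :
    ∃ k : EuclideanSpace ℝ (Fin n) → ℝ, ContDiff ℝ 1 k ∧ LipschitzWith L k ∧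
      (∀ x, k x ∈ Set.Icc (0:ℝ) 1) ∧
      (∀ x, (∀ y ∈ Metric.ball x η, q y = q x) → k x = q x) := by
  set φ : ContDiffBump (0 : EuclideanSpace ℝ (Fin n)) := ⟨η / 2, η, half_pos hη, half_lt_self hη⟩ with hφ
  set f := φ.normed volume with hf
  have hf0 : ∀ t, 0 ≤ f t := fun t => φ.nonneg_normed t
  have hf1 : ∫ t, f t = 1 := φ.integral_normed
  have hfi : Integrable f := φ.integrable_normed
  have hi : ∀ x, Integrable (fun t => f t * q (x - t)) := by
    intro x
    apply hfi.mul_bdd (c := 1)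
    · exact Continuous.aestronglyMeasurable (by have := hq.continuous; fun_prop)
    · refine Filter.Eventually.of_forall fun t => ?_
      rw [Real.norm_eq_abs, abs_of_nonneg (h01 _).1]; exact (h01 _).2
  set k : EuclideanSpace ℝ (Fin n) → ℝ := convolution f q (ContinuousLinearMap.lsmul ℝ ℝ) volume with hk
  have hkx : ∀ x, k x = ∫ t, f t * q (x - t) := by
    intro x; rfl
  refine ⟨k, ?_, ?_, ?_, ?_⟩
  · exact φ.hasCompactSupport_normed.contDiff_convolution_left (n := 1) _ φ.contDiff_normed
      hq.continuous.locallyIntegrable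
  · apply LipschitzWith.of_dist_le_mul
    intro x y
    rw [Real.dist_eq, hkx, hkx, ← integral_sub (hi x) (hi y)]
    have h1 : ∀ t, ‖f t * q (x - t) - f t * q (y - t)‖ ≤ f t * (L * dist x y) := by
      intro t
      rw [← mul_sub, norm_mul, Real.norm_eq_abs, abs_of_nonneg (hf0 t)]
      apply mul_le_mul_of_nonneg_left _ (hf0 t)
      have := hq.dist_le_mul (x - t) (y - t)
      rwa [dist_sub_right, dist_eq_norm] at this
    refine (norm_integral_le_of_norm_le (hfi.mul_const _) (Filter.Eventually.of_forall h1)).trans_eq ?_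
    rw [integral_mul_const, hf1, one_mul]
  · intro x
    rw [hkx]
    constructor
    · exact integral_nonneg fun t => mul_nonneg (hf0 t) (h01 _).1
    · rw [← hf1]
      exact integral_mono (hi x) hfi fun t => mul_le_of_le_one_right (hf0 t) (h01 _).2
  · intro x hx
    exact φ.normed_convolution_eq_right hx

lemma fderiv_sum_sq {n : ℕ} (A : EuclideanSpace ℝ (Fin n) →L[ℝ] ℝ) :
    ∑ i, (A (EuclideanSpace.single i (1:ℝ))) ^ 2 = ‖A‖ ^ 2 := by
  have h : ∀ v, A v = inner ℝ ((InnerProductSpace.toDual ℝ _).symm A) v := fun v => by simp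
  rw [← LinearIsometryEquiv.norm_map (InnerProductSpace.toDual ℝ (EuclideanSpace ℝ (Fin n))).symm A,
    EuclideanSpace.real_norm_sq_eq]
  apply Finset.sum_congr rfl
  intro i _
  rw [h, EuclideanSpace.inner_single_right]; simp

lemma unif_exp {n : ℕ} (k : EuclideanSpace ℝ (Fin n) → ℝ) (hk : ContDiff ℝ 1 k)
    (hc : HasCompactSupport k) :
    ∀ η > 0, ∃ h0 > 0, ∀ x (i : Fin n) (h : ℝ), |h| ≤ h0 →
      |k (x + h • EuclideanSpace.single i (1:ℝ)) - k x - h * fderiv ℝ k x (EuclideanSpace.single i 1)| ≤ η * |h| := by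
  intro η hη
  have huc : UniformContinuous (fderiv ℝ k) :=
    Continuous.uniformContinuous_of_tendsto_cocompact (hk.continuous_fderiv one_ne_zero) (hc.fderiv (𝕜 := ℝ)).is_zero_at_infty
  obtain ⟨d, hd, H⟩ := Metric.uniformContinuous_iff.1 huc η hη
  refine ⟨d / 2, half_pos hd, fun x i h hh => ?_⟩
  set v := h • EuclideanSpace.single i (1:ℝ) with hv
  have hnv : ‖v‖ = |h| := by rw [hv, norm_smul]; simp
  have key := (convex_ball x d).norm_image_sub_le_of_norm_hasFDerivWithin_le'
    (f := k) (f' := fderiv ℝ k) (φ := fderiv ℝ k x) (C := η) (x := x) (y := x + v)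
    (fun y _ => ((hk.differentiable one_ne_zero) y).hasFDerivAt.hasFDerivWithinAt)
    (fun y hy => by
      have := H (a := y) (b := x) hy
      rw [dist_eq_norm] at this; exact this.le)
    (Metric.mem_ball_self hd) (by rw [Metric.mem_ball, dist_eq_norm, add_sub_cancel_left, hnv]; linarith)
  rw [add_sub_cancel_left, hnv] at key
  rw [hv, map_smul, smul_eq_mul, Real.norm_eq_abs] at key
  exact key

noncomputable def mS {n : ℕ} (K : Set (EuclideanSpace ℝ (Fin n))) (s : ℝ) : ℝ :=
  (ProbabilityTheory.stdGaussian (EuclideanSpace ℝ (Fin n))).real {x | Metric.infDist x K ≤ s}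

lemma annulus {n : ℕ} (K : Set (EuclideanSpace ℝ (Fin n))) (hK : IsCompact K) (hne : K.Nonempty)
    (s δ η : ℝ) (hη : 0 < η) (hδ : 0 < δ - 2 * η) :
    ∃ c ∈ Set.Icc (mS K s) (mS K (s + δ)),
      gI c ≤ (1 + (δ - 2 * η)⁻¹) * (mS K (s + δ) - mS K s) := by
  set γ := ProbabilityTheory.stdGaussian (EuclideanSpace ℝ (Fin n)) with hγ
  set d : EuclideanSpace ℝ (Fin n) → ℝ := fun x => Metric.infDist x K with hd
  have hdl : LipschitzWith 1 d := Metric.lipschitz_infDist_pt K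
  have hdc : Continuous d := hdl.continuous
  set L : NNReal := ⟨(δ - 2 * η)⁻¹, (inv_pos.2 hδ).le⟩ with hLdef
  have hLv : (L : ℝ) = (δ - 2 * η)⁻¹ := rfl
  set q : EuclideanSpace ℝ (Fin n) → ℝ := fun x => max 0 (min 1 ((s + δ - η - d x) * L)) with hq
  have hql : LipschitzWith L q := by
    have h1 : LipschitzWith L (fun x => (s + δ - η - d x) * L) := by
      apply LipschitzWith.of_dist_le_mul
      intro x y
      rw [Real.dist_eq, ← sub_mul, abs_mul, abs_of_nonneg L.coe_nonneg, mul_comm]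
      apply mul_le_mul_of_nonneg_left _ L.coe_nonneg
      have := hdl.dist_le_mul x y
      rw [Real.dist_eq] at this
      rw [show s + δ - η - d x - (s + δ - η - d y) = -(d x - d y) by ring, abs_neg]
      simpa using this
    exact (h1.const_min 1).const_max 0
  have hq01 : ∀ x, q x ∈ Set.Icc (0:ℝ) 1 := fun x =>
    ⟨le_max_left _ _, max_le zero_le_one (min_le_left _ _)⟩
  have hball : ∀ x y, y ∈ Metric.ball x η → |d y - d x| < η := by
    intro x y hy
    have := hdl.dist_le_mul y x
    rw [Real.dist_eq, NNReal.coe_one, one_mul] at this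
    exact this.trans_lt hy
  have hq1 : ∀ y, d y ≤ s + η → q y = 1 := by
    intro y hy
    have : 1 ≤ (s + δ - η - d y) * L := by
      rw [hLv, ← div_eq_mul_inv, le_div_iff₀ hδ]; linarith
    simp only [hq, min_eq_left this]; simp
  have hq0 : ∀ y, s + δ - η ≤ d y → q y = 0 := by
    intro y hy
    have : (s + δ - η - d y) * L ≤ 0 := mul_nonpos_of_nonpos_of_nonneg (by linarith) L.2
    simp only [hq]
    exact max_eq_left ((min_le_right _ _).trans this)
  obtain ⟨k, hk, hkl, hk01, hkq⟩ := mollify q L hql hq01 η hη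
  have hk1 : ∀ x, d x ≤ s → k x = 1 := by
    intro x hx
    rw [hkq x, hq1 x (by linarith)]
    intro y hy
    have := abs_lt.1 (hball x y hy)
    rw [hq1 x (by linarith), hq1 y (by linarith)]
  have hk0 : ∀ x, s + δ < d x → k x = 0 := by
    intro x hx
    rw [hkq x, hq0 x (by linarith)]
    intro y hy
    have := abs_lt.1 (hball x y hy)
    rw [hq0 x (by linarith), hq0 y (by linarith)]
  have hcs : HasCompactSupport k := by
    apply HasCompactSupport.intro (hK.cthickening (r := s + δ))
    intro x hx
    apply hk0
    by_contra! h
    obtain ⟨y, hy, hxy⟩ := hK.exists_infDist_eq_dist hne x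
    exact hx (Metric.mem_cthickening_of_dist_le x y _ _ hy (hxy ▸ h))
  have hf1 : ∀ x, d x ≤ s → fderiv ℝ k x = 0 := by
    intro x hx
    apply IsLocalMax.fderiv_eq_zero
    exact Filter.Eventually.of_forall fun y => by rw [hk1 x hx]; exact (hk01 y).2
  have hf0 : ∀ x, s + δ < d x → fderiv ℝ k x = 0 := by
    intro x hx
    apply IsLocalMin.fderiv_eq_zero
    exact Filter.Eventually.of_forall fun y => by rw [hk0 x hx]; exact (hk01 y).1
  have hfL : ∀ x, ‖fderiv ℝ k x‖ ≤ L := fun x => norm_fderiv_le_of_lipschitz ℝ hkl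
  have B := gauss_bobkov n k (fun i x => fderiv ℝ k x (EuclideanSpace.single i 1)) hk.continuous
    (fun i => (hk.continuous_fderiv one_ne_zero).clm_apply continuous_const) hk01 L
    (fun i x => by
      rw [← Real.norm_eq_abs]
      refine ((fderiv ℝ k x).le_opNorm _).trans ?_
      simpa using hfL x) (unif_exp k hk hcs)
  have hms : ∀ r, MeasurableSet {x | d x ≤ r} := fun r => measurableSet_le hdc.measurable measurable_const
  have hki : Integrable k γ := Integrable.of_bound hk.continuous.aestronglyMeasurable 1
    (Filter.Eventually.of_forall fun x => by
      rw [Real.norm_eq_abs, abs_of_nonneg (hk01 x).1]; exact (hk01 x).2)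
  have hind : ∀ A : Set (EuclideanSpace ℝ (Fin n)), MeasurableSet A →
      Integrable (A.indicator (fun _ => (1:ℝ))) γ := fun A hA => (integrable_const 1).indicator hA
  have hI : ∀ A : Set (EuclideanSpace ℝ (Fin n)), MeasurableSet A →
      ∫ x, A.indicator (fun _ => (1:ℝ)) x ∂γ = γ.real A := fun A hA => by
    rw [integral_indicator_const _ hA]; simp
  refine ⟨∫ x, k x ∂γ, ⟨?_, ?_⟩, ?_⟩
  · rw [mS, ← hI _ (hms s)]
    apply integral_mono (hind _ (hms s)) hki
    intro x
    by_cases hx : d x ≤ s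
    · simp only; rw [Set.indicator_of_mem (by exact hx), hk1 x hx]
    · simp only; rw [Set.indicator_of_notMem (by exact hx)]; exact (hk01 x).1
  · rw [mS, ← hI _ (hms (s + δ))]
    apply integral_mono hki (hind _ (hms _))
    intro x
    by_cases hx : d x ≤ s + δ
    · simp only; rw [Set.indicator_of_mem (by exact hx)]; exact (hk01 x).2
    · simp only; rw [Set.indicator_of_notMem (by exact hx), hk0 x (not_le.1 hx)]
  · refine B.trans ?_
    simp only [fderiv_sum_sq]
    have hsub : {x | d x ≤ s} ⊆ {x | d x ≤ s + δ} := fun x hx => by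
      have : d x ≤ s := hx
      show d x ≤ s + δ
      linarith
    have e : mS K (s + δ) - mS K s = γ.real ({x | d x ≤ s + δ} \ {x | d x ≤ s}) := by
      rw [measureReal_sdiff hsub (hms s)]; rfl
    rw [e, ← hI _ ((hms _).diff (hms _)), ← integral_const_mul]
    apply integral_mono_of_nonneg (Filter.Eventually.of_forall fun x => Real.sqrt_nonneg _)
      ((hind _ ((hms _).diff (hms _))).const_mul _)
    refine Filter.Eventually.of_forall fun x => ?_
    simp only
    by_cases hx : d x ≤ s
    · rw [hk1 x hx, hf1 x hx, Set.indicator_of_notMem (fun h => h.2 hx)]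
      simp [gI]
    · by_cases hx2 : d x ≤ s + δ
      · rw [Set.indicator_of_mem (s := {x | d x ≤ s + δ} \ {x | d x ≤ s}) (a := x) ⟨hx2, hx⟩, mul_one]
        apply Real.sqrt_le_iff.2
        refine ⟨by positivity, ?_⟩
        have h1 := gI_nonneg (k x)
        have h2 := gI_le_one (k x)
        have h3 := hfL x
        rw [hLv] at h3
        have h4 := norm_nonneg (fderiv ℝ k x)
        nlinarith
      · rw [hk0 x (not_le.1 hx2), hf0 x (not_le.1 hx2), Set.indicator_of_notMem (fun h => hx2 h.1)]
        simp [gI]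

lemma gQ_nonpos {p : ℝ} (hp0 : 0 < p) (hp : p < 1 / 2) : gQ p ≤ 0 := by
  have hm : p ∈ Set.Ioo (0:ℝ) 1 := ⟨hp0, by linarith⟩
  rw [← gPhi_strictMono.le_iff_le, gPhi_Q hm, gPhi_zero]; exact hp.le

lemma gQ_mono {a b : ℝ} (ha : 0 < a) (hab : a ≤ b) (hb : b < 1) : gQ a ≤ gQ b :=
  gQ_strictMonoOn.monotoneOn ⟨ha, by linarith⟩ ⟨by linarith, hb⟩ hab

lemma gI_mono {a b : ℝ} (ha : 0 < a) (hab : a ≤ b) (hb : b < 1 / 2) : gI a ≤ gI b := by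
  rw [gI_eq ⟨ha, by linarith⟩, gI_eq ⟨by linarith, by linarith⟩]
  apply gphi_anti
  rw [abs_of_nonpos (gQ_nonpos ha (by linarith)), abs_of_nonpos (gQ_nonpos (by linarith) hb)]
  linarith [gQ_mono ha hab (by linarith)]

lemma mS_mono {n : ℕ} (K : Set (EuclideanSpace ℝ (Fin n))) : Monotone (mS K) := by
  intro a b hab
  apply measureReal_mono _ (measure_ne_top _ _)
  intro x hx
  exact le_trans (show Metric.infDist x K ≤ a from hx) hab

lemma annulus2 {n : ℕ} (K : Set (EuclideanSpace ℝ (Fin n))) (hK : IsCompact K) (hne : K.Nonempty)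
    (s δ : ℝ) (hδ : 0 < δ) (h0 : 0 < mS K s) (h1 : mS K (s + δ) < 1 / 2) :
    gI (mS K s) ≤ (1 + δ⁻¹) * (mS K (s + δ) - mS K s) := by
  have ht : Filter.Tendsto (fun η : ℝ => (1 + (δ - 2 * η)⁻¹) * (mS K (s + δ) - mS K s))
      (nhdsWithin 0 (Set.Ioi 0)) (nhds ((1 + (δ - 2 * 0)⁻¹) * (mS K (s + δ) - mS K s))) := by
    apply Filter.Tendsto.mono_left _ nhdsWithin_le_nhds
    apply ContinuousAt.tendsto (f := fun η : ℝ => (1 + (δ - 2 * η)⁻¹) * (mS K (s + δ) - mS K s))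
    apply ContinuousAt.mul _ continuousAt_const
    apply continuousAt_const.add
    apply ContinuousAt.inv₀ (by fun_prop)
    simp; exact hδ.ne'
  rw [mul_zero, sub_zero] at ht
  refine ge_of_tendsto ht ?_
  filter_upwards [Ioo_mem_nhdsGT (show (0:ℝ) < δ / 2 by linarith)] with η hη
  obtain ⟨c, hc, h⟩ := annulus K hK hne s δ η hη.1 (by linarith [hη.2])
  exact (gI_mono h0 hc.1 (by linarith [hc.2])).trans h

lemma gPhi_sub_le {a b : ℝ} (hab : a ≤ b) (hb : b ≤ 0) : gPhi b - gPhi a ≤ gphi b * (b - a) := by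
  have := (convex_Icc a b).image_sub_le_mul_sub_of_deriv_le (f := gPhi) gPhi_cont.continuousOn
    (fun x _ => (gPhi_deriv x).differentiableAt.differentiableWithinAt) (C := gphi b)
    (fun x hx => by
      rw [interior_Icc] at hx
      rw [(gPhi_deriv x).deriv]
      apply gphi_anti
      rw [abs_of_nonpos hb, abs_of_nonpos (by linarith [hx.2])]
      linarith [hx.2]) a (Set.left_mem_Icc.2 hab) b (Set.right_mem_Icc.2 hab) hab
  exact this

lemma step {n : ℕ} (K : Set (EuclideanSpace ℝ (Fin n))) (hK : IsCompact K) (hne : K.Nonempty)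
    (s δ A : ℝ) (hδ : 0 < δ) (h0 : 0 < mS K s) (h1 : mS K (s + δ) < 1 / 2)
    (hA : -A ≤ gQ (mS K s)) :
    gQ (mS K s) + δ * ((1 + δ)⁻¹ * Real.exp (-(δ * A))) ≤ gQ (mS K (s + δ)) := by
  have hmono : mS K s ≤ mS K (s + δ) := mS_mono K (by linarith)
  have H := annulus2 K hK hne s δ hδ h0 h1
  set a := gQ (mS K s) with ha
  set b := gQ (mS K (s + δ)) with hb
  have hab : a ≤ b := gQ_mono h0 hmono (by linarith)
  have hb0 : b ≤ 0 := gQ_nonpos (by linarith) h1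
  have ea : gPhi a = mS K s := gPhi_Q ⟨h0, by linarith⟩
  have eb : gPhi b = mS K (s + δ) := gPhi_Q ⟨by linarith, by linarith⟩
  rw [← ea, ← eb, gI_Phi] at H
  have H2 := gPhi_sub_le hab hb0
  have e : gphi a = gphi b * Real.exp ((b ^ 2 - a ^ 2) / 2) := by
    unfold gphi
    rw [mul_assoc, ← Real.exp_add]; congr 2; ring
  have H3 : gphi b * Real.exp ((b ^ 2 - a ^ 2) / 2) ≤ gphi b * ((1 + δ⁻¹) * (b - a)) := by
    rw [← e]
    refine H.trans ?_
    calc _ ≤ (1 + δ⁻¹) * (gphi b * (b - a)) := by gcongr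
      _ = _ := by ring
  have H4 := le_of_mul_le_mul_left H3 (gphi_pos b)
  have hA0 : 0 ≤ A := by linarith
  have hδ1 : (1 + δ⁻¹) = (1 + δ) / δ := by field_simp; ring
  by_cases hx : δ ≤ b - a
  · have : (1 + δ)⁻¹ * Real.exp (-(δ * A)) ≤ 1 := by
      apply mul_le_one₀ (inv_le_one_of_one_le₀ (by linarith)) (Real.exp_pos _).le
      apply Real.exp_le_one_iff.2
      have := mul_nonneg hδ.le hA0
      linarith
    nlinarith
  · push Not at hx
    have h5 : Real.exp (-(δ * A)) ≤ Real.exp ((b ^ 2 - a ^ 2) / 2) := by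
      apply Real.exp_le_exp.2
      have e2 : (b ^ 2 - a ^ 2) / 2 = -((b - a) * ((-a - b) / 2)) := by ring
      rw [e2]
      apply neg_le_neg
      apply mul_le_mul hx.le (by linarith) (by linarith) hδ.le
    have h6 := h5.trans H4
    rw [hδ1, div_mul_eq_mul_div, le_div_iff₀ hδ] at h6
    have : δ * ((1 + δ)⁻¹ * Real.exp (-(δ * A))) ≤ b - a := by
      rw [mul_left_comm, inv_mul_le_iff₀ (by linarith)]
      linarith
    linarith

lemma gauss_iso {n : ℕ} (K : Set (EuclideanSpace ℝ (Fin n))) (hK : IsCompact K) (hne : K.Nonempty)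
    (t : ℝ) (ht : 0 < t) (h0 : gPhi (-t) < mS K 0) : 1 / 2 ≤ mS K t := by
  by_contra! hc
  have hpos : ∀ s, 0 ≤ s → 0 < mS K s := fun s hs =>
    lt_of_lt_of_le ((gPhi_pos _).trans h0) (mS_mono K hs)
  have hlt : ∀ s, s ≤ t → mS K s < 1 / 2 := fun s hs => lt_of_le_of_lt (mS_mono K hs) hc
  set A := -gQ (mS K 0) with hA
  have hAt : A < t := by
    have : -t < gQ (mS K 0) := by
      rw [← gPhi_strictMono.lt_iff_lt, gPhi_Q ⟨hpos 0 le_rfl, by linarith [hlt 0 ht.le]⟩]; exact h0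
    linarith
  have key : ∀ M : ℕ, -A + t * ((1 + t / (M + 1))⁻¹ * Real.exp (-(t / (M + 1) * A))) ≤ 0 := by
    intro M
    set δ := t / ((M:ℝ) + 1) with hδ
    have hδp : 0 < δ := by positivity
    have hMδ : ((M:ℝ) + 1) * δ = t := by rw [hδ]; field_simp
    have ind : ∀ j : ℕ, j ≤ M + 1 → -A + j * (δ * ((1 + δ)⁻¹ * Real.exp (-(δ * A)))) ≤ gQ (mS K (j * δ)) := by
      intro j
      induction j with
      | zero => intro _; simp [hA]
      | succ j ih =>
        intro hj
        have hj' : ((j:ℝ) + 1) ≤ M + 1 := by exact_mod_cast hj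
        have h1 : (j:ℝ) * δ + δ ≤ t := by rw [← hMδ]; nlinarith
        have hj0 : 0 ≤ (j:ℝ) * δ := by positivity
        have := step K hK hne (j * δ) δ A hδp (hpos _ hj0) (hlt _ h1) (by
          rw [hA, neg_neg]
          exact gQ_mono (hpos 0 le_rfl) (mS_mono K hj0) (by linarith [hlt (j * δ) (by linarith)]))
        have ih' := ih (by omega)
        push_cast
        rw [show ((j:ℝ) + 1) * δ = j * δ + δ by ring]
        linarith
    have := ind (M + 1) le_rfl
    push_cast at this
    rw [hMδ, ← mul_assoc, hMδ] at this
    exact this.trans (gQ_nonpos (hpos t ht.le) hc)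
  have lim0 : Filter.Tendsto (fun M : ℕ => t / ((M:ℝ) + 1)) Filter.atTop (nhds 0) := by
    have := (tendsto_const_div_atTop_nhds_zero_nat t).comp (Filter.tendsto_add_atTop_nat 1)
    refine this.congr fun M => ?_
    simp
  have lim : Filter.Tendsto (fun M : ℕ => -A + t * ((1 + t / ((M:ℝ) + 1))⁻¹ *
      Real.exp (-(t / ((M:ℝ) + 1) * A)))) Filter.atTop
      (nhds (-A + t * ((1 + 0)⁻¹ * Real.exp (-(0 * A))))) := by
    apply Filter.Tendsto.const_add
    apply Filter.Tendsto.const_mul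
    apply Filter.Tendsto.mul
    · exact (lim0.const_add 1).inv₀ (by norm_num)
    · exact (Real.continuous_exp.tendsto _).comp (lim0.mul_const A).neg
  have := le_of_tendsto' lim key
  simp at this
  linarith

lemma lp_cmp {n : ℕ} (p : ℝ) (hp : 0 < p) (v : Fin n → ℝ) (D : ℝ) (hD : 0 < D)
    (hv : ∑ i, v i ^ 2 ≤ D ^ 2) :
    (∑ i, |v i| ^ p) ^ (1 / p) ≤ (n:ℝ) ^ (1 / min p 2 - 1 / 2) * D := by
  have hs0 : 0 ≤ ∑ i, |v i| ^ p := Finset.sum_nonneg fun i _ => Real.rpow_nonneg (abs_nonneg _) _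
  rcases le_total 2 p with h | h
  · rw [min_eq_right h, sub_self, Real.rpow_zero, one_mul]
    rw [one_div, Real.rpow_inv_le_iff_of_pos hs0 hD.le hp]
    have hvi : ∀ i, |v i| ≤ D := by
      intro i
      apply abs_le_of_sq_le_sq _ hD.le
      refine le_trans ?_ hv
      exact Finset.single_le_sum (f := fun i => v i ^ 2) (fun i _ => sq_nonneg _) (Finset.mem_univ i)
    calc ∑ i, |v i| ^ p ≤ ∑ i, v i ^ 2 * D ^ (p - 2) := by
          apply Finset.sum_le_sum
          intro i _
          rcases eq_or_ne (v i) 0 with h0 | h0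
          · rw [h0, abs_zero, Real.zero_rpow hp.ne']; simp
          · have : |v i| ^ p = v i ^ 2 * |v i| ^ (p - 2) := by
              rw [Real.rpow_sub (abs_pos.2 h0), Real.rpow_two, sq_abs]
              field_simp
            rw [this]
            gcongr
            exact hvi i
      _ ≤ D ^ 2 * D ^ (p - 2) := by rw [← Finset.sum_mul]; gcongr
      _ = D ^ p := by rw [← Real.rpow_two, ← Real.rpow_add hD]; congr 1; ring
  · rw [min_eq_left h]
    have hr : 1 ≤ 2 / p := by rw [le_div_iff₀ hp]; linarith
    have h1 := Real.rpow_sum_le_const_mul_sum_rpow_of_nonneg (f := fun i => |v i| ^ p)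
      (s := Finset.univ) hr
      (fun i _ => Real.rpow_nonneg (abs_nonneg _) _)
    have e : ∀ i, (|v i| ^ p) ^ (2 / p) = v i ^ 2 := by
      intro i
      rw [← Real.rpow_mul (abs_nonneg _), mul_div_cancel₀ _ hp.ne', Real.rpow_two, sq_abs]
    simp only [e, Finset.card_univ, Fintype.card_fin] at h1
    have h2 : (∑ i, |v i| ^ p) ^ (2 / p) ≤ (n:ℝ) ^ (2 / p - 1) * D ^ 2 := h1.trans (by gcongr)
    have h3 := Real.rpow_le_rpow (Real.rpow_nonneg hs0 _) h2 (show (0:ℝ) ≤ 1 / 2 by norm_num)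
    rw [← Real.rpow_mul hs0, Real.mul_rpow (by positivity) (by positivity), ← Real.rpow_mul (by positivity),
      ← Real.sqrt_eq_rpow (D ^ 2), Real.sqrt_sq hD.le] at h3
    convert! h3 using 2
    · field_simp
    · congr 1; field_simp

lemma push1 : (ProbabilityTheory.gaussianReal 0 1).map gPhi = volume.restrict (Set.Icc (0:ℝ) 1) := by
  have hm : Measurable gPhi := gPhi_cont.measurable
  apply Measure.ext_of_Iic
  intro a
  rw [Measure.map_apply hm measurableSet_Iic, Measure.restrict_apply measurableSet_Iic]
  rcases le_or_gt a 0 with h | h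
  · have e : gPhi ⁻¹' Set.Iic a = ∅ := by
      ext x; simp only [Set.mem_preimage, Set.mem_Iic, Set.mem_empty_iff_false, iff_false, not_le]
      exact h.trans_lt (gPhi_pos x)
    rw [e, measure_empty]
    symm
    apply measure_mono_null (t := {(0:ℝ)}) _ (by simp)
    rintro x ⟨hx, hx2⟩
    exact le_antisymm (hx.trans h) hx2.1
  · rcases lt_or_ge a 1 with h1 | h1
    · have ha : a ∈ Set.Ioo (0:ℝ) 1 := ⟨h, h1⟩
      have e : gPhi ⁻¹' Set.Iic a = Set.Iic (gQ a) := by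
        ext x; simp only [Set.mem_preimage, Set.mem_Iic]
        conv_lhs => rw [← gPhi_Q ha, gPhi_strictMono.le_iff_le]
      have e2 : Set.Iic a ∩ Set.Icc 0 1 = Set.Icc 0 a := by
        ext x; simp only [Set.mem_inter_iff, Set.mem_Iic, Set.mem_Icc]
        constructor
        · rintro ⟨h1, h2, h3⟩; exact ⟨h2, h1⟩
        · rintro ⟨h2, h3⟩; exact ⟨h3, h2, by linarith⟩
      rw [e, e2, Real.volume_Icc, sub_zero]
      conv_rhs => rw [← gPhi_Q ha]
      rw [gPhi, ofReal_measureReal]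
    · have e : gPhi ⁻¹' Set.Iic a = Set.univ := by
        ext x; simp only [Set.mem_preimage, Set.mem_Iic, Set.mem_univ, iff_true]
        exact (gPhi_lt_one x).le.trans h1
      have e2 : Set.Iic a ∩ Set.Icc 0 1 = Set.Icc 0 1 :=
        Set.inter_eq_right.2 fun x hx => hx.2.trans h1
      rw [e, e2, measure_univ, Real.volume_Icc]; simp

noncomputable def gPsi {n : ℕ} (x : EuclideanSpace ℝ (Fin n)) : Fin n → ℝ := fun i => gPhi (x i)

lemma gPsi_cont {n : ℕ} : Continuous (gPsi (n := n)) := by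
  unfold gPsi
  have := gPhi_cont
  fun_prop

lemma push {n : ℕ} : (ProbabilityTheory.stdGaussian (EuclideanSpace ℝ (Fin n))).map gPsi =
    volume.restrict (Set.Icc (0 : Fin n → ℝ) 1) := by
  have hm : Measurable gPhi := gPhi_cont.measurable
  rw [← ProbabilityTheory.map_pi_eq_stdGaussian,
    Measure.map_map gPsi_cont.measurable (by fun_prop)]
  have e : (gPsi ∘ WithLp.toLp 2 : (Fin n → ℝ) → Fin n → ℝ) = fun x i => gPhi (x i) := rfl
  have : SigmaFinite ((ProbabilityTheory.gaussianReal 0 1).map gPhi) := by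
    rw [push1]; infer_instance
  rw [e, Measure.pi_map_pi (μ := fun _ => ProbabilityTheory.gaussianReal 0 1) (f := fun _ => gPhi)
    (fun _ => hm.aemeasurable)]
  simp only [push1]
  rw [← Set.pi_univ_Icc, volume_pi, Measure.restrict_pi_pi]
  rfl

lemma gPsi_dist {n : ℕ} (x y : EuclideanSpace ℝ (Fin n)) :
    ∑ i, (gPsi x i - gPsi y i) ^ 2 ≤ ((√(2 * π))⁻¹ * dist x y) ^ 2 := by
  have hl : ∀ a b, |gPhi a - gPhi b| ≤ (√(2 * π))⁻¹ * |a - b| := by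
    intro a b
    have := convex_univ.norm_image_sub_le_of_norm_hasDerivWithin_le (f := gPhi) (f' := gphi)
      (C := (√(2 * π))⁻¹) (fun x _ => (gPhi_deriv x).hasDerivWithinAt)
      (fun x _ => by rw [Real.norm_eq_abs, abs_of_pos (gphi_pos x)]; exact gphi_le_c x)
      (Set.mem_univ b) (Set.mem_univ a)
    exact this
  rw [mul_pow, EuclideanSpace.dist_eq, Real.sq_sqrt (by positivity), Finset.mul_sum]
  apply Finset.sum_le_sum
  intro i _
  rw [Real.dist_eq, ← mul_pow, ← sq_abs (gPsi x i - gPsi y i)]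
  exact pow_le_pow_left₀ (abs_nonneg _) (hl _ _) 2

lemma core {n : ℕ} (S R : Set (Fin n → ℝ)) (hS : MeasurableSet S) (hR : MeasurableSet R)
    (hSs : S ⊆ Set.Icc 0 1) (hRs : R ⊆ Set.Icc 0 1) (hRv : volume R < ENNReal.ofReal (1 / 2))
    (t : ℝ) (ht : 0 < t) (hSv : ENNReal.ofReal (1 / 2 * Real.exp (-t ^ 2 / 2)) ≤ volume S) :
    ∃ x ∈ S, ∃ y ∈ Set.Icc (0 : Fin n → ℝ) 1 \ R,
      ∑ i, (x i - y i) ^ 2 ≤ ((√(2 * π))⁻¹ * t) ^ 2 := by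
  set γ := ProbabilityTheory.stdGaussian (EuclideanSpace ℝ (Fin n)) with hγ
  have hcube : MeasurableSet (Set.Icc (0 : Fin n → ℝ) 1) := measurableSet_Icc
  have hval : ∀ A : Set (Fin n → ℝ), MeasurableSet A → A ⊆ Set.Icc 0 1 →
      γ (gPsi ⁻¹' A) = volume A := by
    intro A hA hAs
    rw [← Measure.map_apply gPsi_cont.measurable hA, push, Measure.restrict_apply hA,
      Set.inter_eq_left.2 hAs]
  have hPS : MeasurableSet (gPsi ⁻¹' S) := gPsi_cont.measurable hS
  have h1 : ENNReal.ofReal (gPhi (-t)) < γ (gPsi ⁻¹' S) := by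
    rw [hval S hS hSs]
    refine lt_of_lt_of_le ?_ hSv
    exact (ENNReal.ofReal_lt_ofReal_iff (by positivity)).2 (gPhi_tail ht)
  obtain ⟨K, hKS, hK, hKv⟩ := hPS.exists_lt_isCompact h1
  have hne : K.Nonempty := by
    rw [Set.nonempty_iff_ne_empty]; rintro rfl; simp at hKv
  have hm0 : gPhi (-t) < mS K 0 := by
    rw [ENNReal.ofReal_lt_iff_lt_toReal (gPhi_pos _).le (measure_ne_top _ _)] at hKv
    refine hKv.trans_le ?_
    apply measureReal_mono _ (measure_ne_top _ _)
    intro x hx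
    exact (Metric.infDist_zero_of_mem hx).le
  have hiso := gauss_iso K hK hne t ht hm0
  have hRm : γ.real (gPsi ⁻¹' R) < 1 / 2 := by
    rw [Measure.real, hval R hR hRs]
    exact (ENNReal.lt_ofReal_iff_toReal_lt hRv.ne_top).1 hRv
  have hex : ∃ y, Metric.infDist y K ≤ t ∧ gPsi y ∉ R := by
    by_contra! hc
    have : mS K t ≤ γ.real (gPsi ⁻¹' R) :=
      measureReal_mono (fun y hy => hc y hy) (measure_ne_top _ _)
    linarith
  obtain ⟨y, hy, hyR⟩ := hex
  obtain ⟨x, hx, hxy⟩ := hK.exists_infDist_eq_dist hne y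
  refine ⟨gPsi x, hKS hx, gPsi y, ⟨⟨fun i => (gPhi_pos _).le, fun i => (gPhi_lt_one _).le⟩, hyR⟩, ?_⟩
  refine (gPsi_dist x y).trans ?_
  rw [hxy, dist_comm] at hy
  gcongr

lemma lpDist_self {n : ℕ} (p : ℝ) (hp : 0 < p) (x : Fin n → ℝ) : lpDist p x x = 0 := by
  simp only [lpDist, sub_self, abs_zero, Real.zero_rpow hp.ne', Finset.sum_const_zero]
  exact Real.zero_rpow (by positivity)

theorem existence_of_adversarial_examples (n : ℕ) (ρ : (Fin n → ℝ) → ℝ)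
    (hρmeas : Measurable ρ) (hρ0 : ∀ x, 0 ≤ ρ x)
    (hρsupp : Function.support ρ ⊆ Set.Icc (0 : Fin n → ℝ) 1)
    (hρint : ∫ x in Set.Icc (0 : Fin n → ℝ) 1, ρ x = 1)
    (R : Set (Fin n → ℝ)) (hR : MeasurableSet R) (hRsub : R ⊆ Set.Icc 0 1)
    (hRvol : volume R < ENNReal.ofReal (1 / 2))
    (p : ℝ) (hp : 0 < p) (ε : ℝ) (hε : 0 ≤ ε)
    (hS : volume (Function.support ρ) ≥
      ENNReal.ofReal ((1 / 2) * Real.exp (-Real.pi * ε ^ 2 * (n : ℝ) ^ (1 - 2 / min p 2)))) :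
    ∃ x, 0 < ρ x ∧ ∃ x' ∈ Set.Icc (0 : Fin n → ℝ) 1 \ R, lpDist p x x' ≤ ε := by
  have hpos : ∀ x ∈ Function.support ρ, 0 < ρ x := fun x hx => lt_of_le_of_ne (hρ0 x) (Ne.symm hx)
  have hSm : MeasurableSet (Function.support ρ) := measurableSet_support hρmeas
  rcases Nat.eq_zero_or_pos n with hn | hn
  · subst hn
    have hx : ∃ x, ρ x ≠ 0 := by
      by_contra! h
      simp [h] at hρint
    obtain ⟨x, hx⟩ := hx
    refine ⟨x, hpos x hx, x, ⟨hρsupp hx, fun hxR => ?_⟩, by rw [lpDist_self p hp]; exact hε⟩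
    have : R = Set.univ := by
      ext y; simp [Subsingleton.elim y x, hxR]
    rw [this, volume_pi, Measure.pi_of_empty] at hRvol
    simp at hRvol
  rcases hε.eq_or_lt with h0 | h0
  · have hlt : volume R < volume (Function.support ρ) := by
      refine hRvol.trans_le ?_
      rw [← h0] at hS
      simpa using hS
    obtain ⟨x, hx, hxR⟩ : ∃ x ∈ Function.support ρ, x ∉ R := by
      by_contra! hc
      exact absurd (measure_mono hc) (not_le.2 hlt)
    exact ⟨x, hpos x hx, x, ⟨hρsupp hx, hxR⟩, by rw [lpDist_self p hp]; exact hε⟩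
  have hn' : (0:ℝ) < n := by exact_mod_cast hn
  set D := ε * (n:ℝ) ^ (1 / 2 - 1 / min p 2) with hD
  have hDp : 0 < D := by positivity
  set t := √(2 * π) * D with ht
  have hsq : 0 < √(2 * π) := by positivity
  have htp : 0 < t := by positivity
  have hexp : -t ^ 2 / 2 = -Real.pi * ε ^ 2 * (n : ℝ) ^ (1 - 2 / min p 2) := by
    rw [ht, hD, mul_pow, Real.sq_sqrt (by positivity), mul_pow, ← Real.rpow_natCast ((n:ℝ) ^ _),
      ← Real.rpow_mul hn'.le, show (1 / 2 - 1 / min p 2) * ((2:ℕ):ℝ) = 1 - 2 / min p 2 by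
        push_cast; ring]
    ring
  obtain ⟨x, hx, y, hy, hxy⟩ := core (Function.support ρ) R hSm hR hρsupp hRsub hRvol t htp
    (by rw [hexp]; exact hS)
  refine ⟨x, hpos x hx, y, hy, ?_⟩
  have e : (√(2 * π))⁻¹ * t = D := by rw [ht]; field_simp
  rw [e] at hxy
  refine (lp_cmp p hp (fun i => x i - y i) D hDp hxy).trans_eq ?_
  rw [hD, mul_left_comm, ← Real.rpow_add hn']
  ring_nf
  simp
end

section
/- (ε-expansion of a half sphere) For the unit sphere S^{n-1} ⊂ ℝⁿ with normalized surface measure μ₁ and geodesic metric, the geodesic ε-expansion of any half sphere has normalized measure at least 1 - √(π/8)·exp(-(n-1)ε²/2). -/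
open Real MeasureTheory RealInnerProductSpace

theorem hs_cos_le (x : ℝ) (h0 : 0 ≤ x) (h1 : x < π / 2) : cos x ≤ exp (-(x ^ 2 / 2)) := by
  have hanti : AntitoneOn (fun y : ℝ => exp (y ^ 2 / 2) * cos y) (Set.Ico 0 (π / 2)) := by
    apply antitoneOn_of_deriv_nonpos (convex_Ico _ _)
    · fun_prop
    · fun_prop
    · intro y hy
      rw [interior_Ico] at hy
      have hd : HasDerivAt (fun y : ℝ => exp (y ^ 2 / 2) * cos y)
          (exp (y ^ 2 / 2) * (y * cos y - sin y)) y := by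
        have h1 : HasDerivAt (fun y : ℝ => y ^ 2 / 2) y y := by
          have := (hasDerivAt_pow 2 y).div_const 2
          exact this.congr_deriv (by norm_num)
        exact (h1.exp.mul (hasDerivAt_cos y)).congr_deriv (by ring)
      rw [hd.deriv]
      have hc : 0 < cos y := cos_pos_of_mem_Ioo ⟨by linarith [hy.1, pi_pos], hy.2⟩
      have ht := lt_tan hy.1 hy.2
      rw [tan_eq_sin_div_cos, lt_div_iff₀ hc] at ht
      exact mul_nonpos_of_nonneg_of_nonpos (exp_pos _).le (by linarith)
  have := hanti (Set.mem_Ico.2 ⟨le_refl 0, by positivity⟩) (Set.mem_Ico.2 ⟨h0, h1⟩) h0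
  simp only [ne_eq, OfNat.ofNat_ne_zero, not_false_eq_true, zero_pow, zero_div, exp_zero,
    cos_zero, mul_one] at this
  rw [exp_neg, ← one_div, le_div_iff₀ (exp_pos _)]
  linarith

section
variable {E : Type*} [NormedAddCommGroup E] [InnerProductSpace ℝ E]

theorem hs_norm_comb (u x : E) (hu : ‖u‖ = 1) (a b : ℝ) :
    ‖a • (x - ⟪x, u⟫ • u) + b • u‖ ^ 2 = a ^ 2 * (‖x‖ ^ 2 - ⟪x, u⟫ ^ 2) + b ^ 2 := by
  have h2 : ⟪u, u⟫ = 1 := by rw [real_inner_self_eq_norm_sq, hu]; norm_num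
  rw [← real_inner_self_eq_norm_sq, ← real_inner_self_eq_norm_sq]
  simp only [inner_add_left, inner_add_right, inner_sub_left, inner_sub_right, inner_smul_left,
    inner_smul_right, h2, real_inner_comm x u]
  simp
  ring

theorem hs_sqrt_lip (s p q : ℝ) : (√(s ^ 2 + p ^ 2) - √(s ^ 2 + q ^ 2)) ^ 2 ≤ (p - q) ^ 2 := by
  have h1 := sq_sqrt (show 0 ≤ s ^ 2 + p ^ 2 by positivity)
  have h2 := sq_sqrt (show 0 ≤ s ^ 2 + q ^ 2 by positivity)
  have h3 : s ^ 2 + p * q ≤ √(s ^ 2 + p ^ 2) * √(s ^ 2 + q ^ 2) := by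
    rw [← sqrt_mul (by positivity)]
    apply le_sqrt_of_sq_le
    nlinarith [sq_nonneg (s * (p - q))]
  nlinarith

noncomputable def hsMap (u : E) (c s : ℝ) (x : E) : E :=
  c • (x - ⟪x, u⟫ • u) + √(s ^ 2 + (c * ⟪x, u⟫) ^ 2) • u

theorem hsMap_lip (u : E) (hu : ‖u‖ = 1) (c : NNReal) (s : ℝ) : LipschitzWith c (hsMap u c s) := by
  apply LipschitzWith.of_dist_le_mul
  intro x y
  rw [dist_eq_norm, dist_eq_norm]
  have e : hsMap u c s x - hsMap u c s y = (c : ℝ) • ((x - y) - ⟪x - y, u⟫ • u) +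
      (√(s ^ 2 + (c * ⟪x, u⟫) ^ 2) - √(s ^ 2 + (c * ⟪y, u⟫) ^ 2)) • u := by
    unfold hsMap
    rw [inner_sub_left]
    module
  apply le_of_sq_le_sq _ (by positivity)
  rw [e, hs_norm_comb u _ hu]
  have := hs_sqrt_lip s (c * ⟪x, u⟫) (c * ⟪y, u⟫)
  rw [inner_sub_left]
  nlinarith

theorem hs_cap_subset (u : E) (hu : ‖u‖ = 1) (c s : ℝ) (hc : 0 < c) (hs : 0 ≤ s)
    (hcs : s ^ 2 + c ^ 2 = 1) :
    {x ∈ Metric.sphere (0 : E) 1 | s < ⟪x, u⟫} ⊆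
      hsMap u c s '' {x ∈ Metric.sphere (0 : E) 1 | 0 < ⟪x, u⟫} := by
  rintro x ⟨hx, hxs⟩
  rw [mem_sphere_zero_iff_norm] at hx
  have h2 : ⟪u, u⟫ = 1 := by rw [real_inner_self_eq_norm_sq, hu]; norm_num
  set t := ⟪x, u⟫ with ht
  have hpos : 0 < t ^ 2 - s ^ 2 := by nlinarith
  set r := √(t ^ 2 - s ^ 2) / c with hr
  have hrp : 0 < r := by positivity
  have hcr : (c * r) ^ 2 = t ^ 2 - s ^ 2 := by
    rw [hr, mul_div_cancel₀ _ hc.ne', sq_sqrt hpos.le]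
  have hin : ⟪c⁻¹ • (x - t • u) + r • u, u⟫ = r := by
    simp only [inner_add_left, inner_sub_left, inner_smul_left, h2, ← ht]
    simp
  refine ⟨c⁻¹ • (x - t • u) + r • u, ⟨?_, ?_⟩, ?_⟩
  · rw [mem_sphere_zero_iff_norm]
    have : ‖c⁻¹ • (x - t • u) + r • u‖ ^ 2 = 1 := by
      rw [ht, hs_norm_comb u x hu, hx, ← ht]
      field_simp
      nlinarith
    exact (sq_eq_sq₀ (norm_nonneg _) zero_le_one).1 (by rw [this]; norm_num)
  · show 0 < ⟪c⁻¹ • (x - t • u) + r • u, u⟫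
    rw [hin]; exact hrp
  · unfold hsMap
    rw [hin, hcr, add_sub_cancel_right, add_sub_cancel, sqrt_sq (hs.trans hxs.le), smul_smul,
      mul_inv_cancel₀ hc.ne', one_smul, sub_add_cancel]

theorem hs_exists_near (v x : E) (hv : ‖v‖ = 1) (hx : ‖x‖ = 1) (ε : ℝ) (hε : 0 ≤ ε)
    (hε' : ε ≤ π) (ht1 : -1 < ⟪x, v⟫)
    (h : cos ε ≤ √(1 - ⟪x, v⟫ ^ 2)) :
    ∃ y ∈ Metric.sphere (0 : E) 1, ⟪y, v⟫ ≥ 0 ∧ arccos ⟪x, y⟫ ≤ ε := by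
  have h2 : ⟪v, v⟫ = 1 := by rw [real_inner_self_eq_norm_sq, hv]; norm_num
  have h3 : ⟪x, x⟫ = 1 := by rw [real_inner_self_eq_norm_sq, hx]; norm_num
  rcases le_or_gt 0 ⟪x, v⟫ with h0 | h0
  · exact ⟨x, by simpa using hx, h0, by rw [h3]; simpa using hε⟩
  set t := ⟪x, v⟫ with ht
  have hp : 0 < 1 - t ^ 2 := by nlinarith
  set r := √(1 - t ^ 2) with hr
  have hrp : 0 < r := by positivity
  have hr2 : r ^ 2 = 1 - t ^ 2 := sq_sqrt hp.le
  refine ⟨r⁻¹ • (x - t • v) + (0 : ℝ) • v, ?_, ?_, ?_⟩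
  · rw [mem_sphere_zero_iff_norm]
    have : ‖r⁻¹ • (x - t • v) + (0 : ℝ) • v‖ ^ 2 = 1 := by
      rw [ht, hs_norm_comb v x hv, hx, ← ht]
      field_simp
      nlinarith
    exact (sq_eq_sq₀ (norm_nonneg _) zero_le_one).1 (by rw [this]; norm_num)
  · apply ge_of_eq
    simp only [inner_add_left, inner_sub_left, inner_smul_left, h2, ← ht]
    simp
  · have : ⟪x, r⁻¹ • (x - t • v) + (0 : ℝ) • v⟫ = r := by
      simp only [inner_add_right, inner_sub_right, inner_smul_right, h3, ← ht]
      field_simp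
      nlinarith
    rw [this, ← arccos_cos hε hε']
    exact antitone_arccos h

variable [MeasurableSpace E] [BorelSpace E]

theorem hs_half (u : E) (d : ℝ) :
    2 * μH[d] {x ∈ Metric.sphere (0 : E) 1 | 0 < ⟪x, u⟫} ≤ μH[d] (Metric.sphere (0 : E) 1) := by
  set H := {x ∈ Metric.sphere (0 : E) 1 | 0 < ⟪x, u⟫} with hH
  set H' := {x ∈ Metric.sphere (0 : E) 1 | ⟪x, u⟫ < 0} with hH'
  have hm : MeasurableSet H' := by
    apply Metric.isClosed_sphere.measurableSet.inter
    exact (isOpen_lt (f := fun x : E => ⟪x, u⟫) (g := fun _ => (0 : ℝ)) (by fun_prop) (by fun_prop)).measurableSet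
  have e : μH[d] H' = μH[d] H := by
    rw [← (IsometryEquiv.neg E).hausdorffMeasure_preimage d H]
    congr 1
    ext x
    simp [hH, hH']
  have hd : Disjoint H H' := by
    rw [Set.disjoint_left]
    rintro x ⟨_, h⟩ ⟨_, h'⟩
    exact lt_asymm h h'
  calc 2 * μH[d] H = μH[d] H + μH[d] H' := by rw [e, two_mul]
    _ = μH[d] (H ∪ H') := (measure_union hd hm).symm
    _ ≤ _ := measure_mono (by rintro x (h | h); exacts [h.1, h.1])

theorem hs_cap (u : E) (hu : ‖u‖ = 1) (c s : ℝ) (hc : 0 < c) (hs : 0 ≤ s)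
    (hcs : s ^ 2 + c ^ 2 = 1) (d : ℕ) :
    2 * μH[d] {x ∈ Metric.sphere (0 : E) 1 | s < ⟪x, u⟫} ≤
      ENNReal.ofReal (c ^ d) * μH[d] (Metric.sphere (0 : E) 1) := by
  have h1 := (hsMap_lip u hu c.toNNReal s).hausdorffMeasure_image_le (d := d) (by positivity)
    {x ∈ Metric.sphere (0 : E) 1 | 0 < ⟪x, u⟫}
  rw [Real.coe_toNNReal c hc.le] at h1
  have h2 := (measure_mono (hs_cap_subset u hu c s hc hs hcs)).trans h1
  have h3 : (c.toNNReal : ENNReal) ^ (d : ℝ) = ENNReal.ofReal (c ^ d) := by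
    rw [ENNReal.rpow_natCast, ENNReal.ofReal_pow hc.le]
    rfl
  rw [h3] at h2
  calc _ ≤ 2 * (ENNReal.ofReal (c ^ d) * μH[d] {x ∈ Metric.sphere (0 : E) 1 | 0 < ⟪x, u⟫}) := by
        gcongr
    _ = ENNReal.ofReal (c ^ d) * (2 * μH[d] {x ∈ Metric.sphere (0 : E) 1 | 0 < ⟪x, u⟫}) := by ring
    _ ≤ _ := by gcongr; exact hs_half u d

theorem hs_finite_half [FiniteDimensional ℝ E] (d : ℕ) (hd : Module.finrank ℝ E = d + 1) (v : E)
    (hv : ‖v‖ = 1) :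
    μH[d] {x ∈ Metric.sphere (0 : E) 1 | ⟪x, v⟫ ≤ 0} < ⊤ := by
  have hv0 : v ≠ 0 := by rintro rfl; simp at hv
  have : Fact (Module.finrank ℝ E = d + 1) := ⟨hd⟩
  have hK : Module.finrank ℝ (Submodule.span ℝ {v})ᗮ = d :=
    Submodule.finrank_orthogonal_span_singleton hv0
  let K := (Submodule.span ℝ {v})ᗮ
  have hcd : ContDiff ℝ 1 (fun w : K => stereoInvFunAux v (w : E)) :=
    contDiff_stereoInvFunAux.comp K.subtypeL.contDiff
  obtain ⟨C, hC⟩ := (hcd.locallyLipschitz.locallyLipschitzOn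
    (s := Metric.closedBall 0 2)).exists_lipschitzOnWith_of_compact (isCompact_closedBall (0 : K) 2)
  have h1 := hC.hausdorffMeasure_image_le (d := d) (by positivity)
  have hfin : μH[d] (Metric.closedBall (0 : K) 2) < ⊤ := by
    rw [← hK]
    exact (isCompact_closedBall (0 : K) 2).measure_lt_top
  refine (measure_mono ?_).trans_lt (h1.trans_lt (ENNReal.mul_lt_top ?_ hfin))
  · rintro x ⟨hx, hxv⟩
    have hne : x ≠ v := by
      rintro rfl
      rw [real_inner_self_eq_norm_sq, hv] at hxv
      norm_num at hxv
    refine ⟨stereoToFun v x, ?_, ?_⟩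
    · rw [mem_closedBall_zero_iff, stereoToFun_apply, norm_smul]
      have hp : ‖K.orthogonalProjectionOnto x‖ ≤ 1 := by
        refine (K.norm_orthogonalProjectionOnto_apply_le x).trans ?_
        rw [mem_sphere_zero_iff_norm] at hx
        exact hx.le
      have hi : innerSL ℝ v x ≤ 0 := by
        rw [innerSL_apply_apply, real_inner_comm]; exact hxv
      have hq : ‖2 / ((1 : ℝ) - innerSL ℝ v x)‖ ≤ 2 := by
        rw [norm_of_nonneg (div_nonneg (by norm_num) (by linarith))]
        rw [div_le_iff₀ (by linarith)]
        linarith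
      calc _ ≤ (2 : ℝ) * 1 := mul_le_mul hq hp (norm_nonneg _) (by norm_num)
        _ = 2 := by norm_num
    · exact congrArg Subtype.val (stereo_left_inv hv (x := ⟨x, hx⟩) hne)
  · exact ENNReal.rpow_lt_top_of_nonneg (by positivity) ENNReal.coe_ne_top

theorem hs_finite [FiniteDimensional ℝ E] (d : ℕ) (hd : Module.finrank ℝ E = d + 1) (v : E)
    (hv : ‖v‖ = 1) : μH[d] (Metric.sphere (0 : E) 1) < ⊤ := by
  have h1 := hs_finite_half d hd v hv
  have h2 := hs_finite_half d hd (-v) (by simpa using hv)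
  refine (measure_mono ?_).trans_lt ((measure_union_le _ _).trans_lt (ENNReal.add_lt_top.2 ⟨h1, h2⟩))
  intro x hx
  rcases le_total ⟪x, v⟫ 0 with h | h
  · exact Or.inl ⟨hx, h⟩
  · exact Or.inr ⟨hx, by simpa using h⟩

theorem hs_pos [FiniteDimensional ℝ E] (d : ℕ) (hd : Module.finrank ℝ E = d + 1) (v : E)
    (hv : ‖v‖ = 1) : 0 < μH[d] (Metric.sphere (0 : E) 1) := by
  have hv0 : v ≠ 0 := by rintro rfl; simp at hv
  have : Fact (Module.finrank ℝ E = d + 1) := ⟨hd⟩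
  have hK : Module.finrank ℝ (Submodule.span ℝ {v})ᗮ = d :=
    Submodule.finrank_orthogonal_span_singleton hv0
  let K := (Submodule.span ℝ {v})ᗮ
  have hpos : 0 < μH[d] (Metric.ball (0 : K) 1) := by
    rw [← hK]
    exact Metric.measure_ball_pos _ _ one_pos
  have hl : LipschitzWith 1 (fun x : E => K.orthogonalProjectionOnto x) := by
    apply LipschitzWith.of_dist_le_mul
    intro x y
    rw [dist_eq_norm, dist_eq_norm, ← map_sub, NNReal.coe_one, one_mul]
    exact K.norm_orthogonalProjectionOnto_apply_le _
  have h1 := hl.hausdorffMeasure_image_le (d := d) (by positivity) (Metric.sphere (0 : E) 1)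
  simp only [ENNReal.coe_one, ENNReal.one_rpow, one_mul] at h1
  refine hpos.trans_le ((measure_mono ?_).trans h1)
  intro w hw
  rw [mem_ball_zero_iff] at hw
  have hwv : ⟪(w : E), v⟫ = 0 := Submodule.mem_orthogonal_singleton_iff_inner_left.1 w.2
  refine ⟨(w : E) + √(1 - ‖w‖ ^ 2) • v, ?_, ?_⟩
  · rw [mem_sphere_zero_iff_norm]
    have := hs_norm_comb v (w : E) hv 1 √(1 - ‖w‖ ^ 2)
    rw [hwv, zero_smul, sub_zero, one_smul, sq_sqrt (by nlinarith [norm_nonneg w])] at this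
    have h2 : ‖(w : E) + √(1 - ‖w‖ ^ 2) • v‖ ^ 2 = 1 := by
      rw [this]; simp
    exact (sq_eq_sq₀ (norm_nonneg _) zero_le_one).1 (by rw [h2]; norm_num)
  · have hvz : K.orthogonalProjectionOnto v = 0 := by
      rw [Submodule.orthogonalProjectionOnto_eq_zero_iff]
      exact Submodule.le_orthogonal_orthogonal _ (Submodule.mem_span_singleton_self v)
    show K.orthogonalProjectionOnto _ = w
    rw [map_add, map_smul, hvz, smul_zero, add_zero]
    exact Submodule.orthogonalProjectionOnto_mem_subspace_eq_self w

theorem hs_tail (d : ℕ) (v : E) (hv : ‖v‖ = 1) (ε : ℝ) (hε : 0 ≤ ε) :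
    2 * μH[d] (Metric.sphere (0 : E) 1 \ {x ∈ Metric.sphere (0 : E) 1 |
        ∃ y ∈ Metric.sphere (0 : E) 1, ⟪y, v⟫ ≥ 0 ∧ arccos ⟪x, y⟫ ≤ ε}) ≤
      ENNReal.ofReal (exp (-(d : ℝ) / 2 * ε ^ 2)) * μH[d] (Metric.sphere (0 : E) 1) := by
  set B := {x ∈ Metric.sphere (0 : E) 1 |
        ∃ y ∈ Metric.sphere (0 : E) 1, ⟪y, v⟫ ≥ 0 ∧ arccos ⟪x, y⟫ ≤ ε} with hB
  rcases lt_or_ge ε (π / 2) with h | h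
  · have hc : 0 < cos ε := cos_pos_of_mem_Ioo ⟨by linarith [pi_pos], h⟩
    have hs : 0 ≤ sin ε := sin_nonneg_of_nonneg_of_le_pi hε (by linarith [pi_pos])
    have h1 := hs_cap (-v) (by simpa using hv) (cos ε) (sin ε) hc hs (sin_sq_add_cos_sq ε) d
    have h2 : cos ε ^ d ≤ exp (-(d : ℝ) / 2 * ε ^ 2) := by
      calc cos ε ^ d ≤ exp (-(ε ^ 2 / 2)) ^ d := pow_le_pow_left₀ hc.le (hs_cos_le ε hε h) d
        _ = _ := by rw [← exp_nat_mul]; congr 1; ring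
    refine le_trans ?_ (h1.trans ?_)
    · gcongr
      rintro x ⟨hx, hxB⟩
      refine ⟨hx, ?_⟩
      by_contra hcon
      rw [inner_neg_right, not_lt] at hcon
      apply hxB
      refine ⟨hx, ?_⟩
      rcases le_or_gt 0 ⟪x, v⟫ with h0 | h0
      · refine ⟨x, hx, h0, ?_⟩
        rw [mem_sphere_zero_iff_norm] at hx
        rw [real_inner_self_eq_norm_sq, hx]; simpa using hε
      · have hs1 : sin ε < 1 := by nlinarith [sin_sq_add_cos_sq ε]
        apply hs_exists_near v x hv (by simpa using hx) ε hε (by linarith [pi_pos]) (by linarith)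
        apply le_sqrt_of_sq_le
        nlinarith [sin_sq_add_cos_sq ε]
    · gcongr
  · have key : ∀ x ∈ Metric.sphere (0 : E) 1 \ B, x = -v ∧ ⟪x, v⟫ < 0 := by
      rintro x ⟨hx, hxB⟩
      have hx' : ‖x‖ = 1 := by simpa using hx
      have hlt : ⟪x, v⟫ < 0 := by
        by_contra hcon
        push Not at hcon
        refine hxB ⟨hx, x, hx, hcon, ?_⟩
        rw [real_inner_self_eq_norm_sq, hx']; simpa using hε
      refine ⟨?_, hlt⟩
      by_contra hne
      have h1 : -1 < ⟪x, v⟫ := by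
        have := (inner_lt_one_iff_real_of_norm_eq_one hx' (by simpa using hv : ‖-v‖ = 1)).2 hne
        rw [inner_neg_right] at this
        linarith
      obtain ⟨y, hy, hy1, hy2⟩ := hs_exists_near v x hv hx' (π / 2) (by positivity)
        (by linarith [pi_pos]) h1 (by rw [cos_pi_div_two]; positivity)
      exact hxB ⟨hx, y, hy, hy1, hy2.trans h⟩
    rcases Nat.eq_zero_or_pos d with rfl | hd
    · refine le_trans ?_ ((hs_half (-v) ((0 : ℕ) : ℝ)).trans ?_)
      · gcongr
        intro x hx
        exact ⟨hx.1, by rw [inner_neg_right]; linarith [(key x hx).2]⟩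
      · simp
    · have := Measure.nullSingletonClass_hausdorff E (d := (d : ℝ)) (by exact_mod_cast hd)
      have : μH[d] (Metric.sphere (0 : E) 1 \ B) = 0 :=
        measure_mono_null (fun x hx => (key x hx).1) (measure_singleton (-v))
      rw [this]
      simp

end

theorem half_sphere_expansion (n : ℕ) (ε : ℝ) (hε : 0 ≤ ε)
    (v : EuclideanSpace ℝ (Fin n)) (hv : ‖v‖ = 1) :
    -- normalized measure of the geodesic ε-expansion of the half sphere {x : ⟪x,v⟫ ≥ 0}
    μH[(n : ℝ) - 1] {x ∈ Metric.sphere (0 : EuclideanSpace ℝ (Fin n)) 1 |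
        ∃ y ∈ Metric.sphere (0 : EuclideanSpace ℝ (Fin n)) 1,
          ⟪y, v⟫ ≥ 0 ∧ Real.arccos ⟪x, y⟫ ≤ ε} /
      μH[(n : ℝ) - 1] (Metric.sphere (0 : EuclideanSpace ℝ (Fin n)) 1) ≥
      ENNReal.ofReal
        (1 - Real.sqrt (Real.pi / 8) * Real.exp (-((n : ℝ) - 1) / 2 * ε ^ 2)) := by
  obtain _ | d := n
  · rw [Subsingleton.elim v 0] at hv
    simp at hv
  have hd : ((d + 1 : ℕ) : ℝ) - 1 = d := by push_cast; ring
  rw [hd]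
  have hfr : Module.finrank ℝ (EuclideanSpace ℝ (Fin (d + 1))) = d + 1 := by simp
  have hT := hs_finite d hfr v hv
  have hT0 := hs_pos d hfr v hv
  have ht := hs_tail d v hv ε hε
  set B := {x ∈ Metric.sphere (0 : EuclideanSpace ℝ (Fin (d + 1))) 1 |
        ∃ y ∈ Metric.sphere (0 : EuclideanSpace ℝ (Fin (d + 1))) 1,
          ⟪y, v⟫ ≥ 0 ∧ Real.arccos ⟪x, y⟫ ≤ ε}
  set S := Metric.sphere (0 : EuclideanSpace ℝ (Fin (d + 1))) 1
  have hsum : μH[d] S ≤ μH[d] B + μH[d] (S \ B) :=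
    (measure_mono (by intro x hx; by_cases h : x ∈ B; exacts [Or.inl h, Or.inr ⟨hx, h⟩])).trans
      (measure_union_le _ _)
  have hBfin : μH[d] B < ⊤ := (measure_mono (fun x hx => hx.1)).trans_lt hT
  have hDfin : μH[d] (S \ B) < ⊤ := (measure_mono Set.sdiff_subset).trans_lt hT
  rw [ge_iff_le, ENNReal.le_div_iff_mul_le (Or.inl hT0.ne') (Or.inl hT.ne)]
  generalize μH[d] S = T at *
  generalize μH[d] B = b at *
  generalize μH[d] (S \ B) = D at *
  lift T to NNReal using hT.ne
  lift b to NNReal using hBfin.ne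
  lift D to NNReal using hDfin.ne
  have hE : rexp (-(((d + 1 : ℕ) : ℝ) - 1) / 2 * ε ^ 2) = rexp (-(d : ℝ) / 2 * ε ^ 2) := by
    rw [hd]
  have hq : (1 : ℝ) / 2 ≤ √(π / 8) := by
    apply le_sqrt_of_sq_le
    linarith [pi_gt_three]
  try rw [hE]
  have he := exp_pos (-(d : ℝ) / 2 * ε ^ 2)
  set e := rexp (-(d : ℝ) / 2 * ε ^ 2)
  have ht' : 2 * (D : ℝ) ≤ e * T := by
    rw [← ENNReal.ofReal_coe_nnreal, ← ENNReal.ofReal_coe_nnreal (p := T),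
      ← ENNReal.ofReal_mul he.le, show (2 : ENNReal) = ENNReal.ofReal 2 by simp,
      ← ENNReal.ofReal_mul (by norm_num)] at ht
    exact (ENNReal.ofReal_le_ofReal_iff (by positivity)).1 ht
  have hsum' : (T : ℝ) ≤ b + D := by exact_mod_cast hsum
  rw [← ENNReal.ofReal_coe_nnreal (p := T), ← ENNReal.ofReal_coe_nnreal (p := b),
    ← ENNReal.ofReal_mul' (by positivity)]
  apply ENNReal.ofReal_le_ofReal
  have h0 : (0 : ℝ) ≤ e * T := by positivity
  nlinarith
end
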